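/- arXiv:0805.3437 — 2 statements merged into one kernel-verified Lean document; each statement's English description precedes it below -/
import Mathlib

section
/- Let M be a finite-dimensional (α,β)-Yetter-Drinfeld module and let M' be the (αβ⁻¹α,α)-Yetter-Drinfeld module equal to M with coaction m ↦ m₍₀₎ ⊗ αβ⁻¹(m₍₁₎). Then the map τ : End(M)̄ → End(M')^op, defined by τ(u)(m) = u₍₀₎(α⁻¹(u₍₁₎)·m) (where u ↦ u₍₀₎ ⊗ u₍₁₎ is the right H-coaction of End(M)), is an isomorphism of algebras in _H𝒴𝒟^H (an algebra map which is bijective, H-linear and H-colinear), with inverse given by τ⁻¹(v)(m) = v₍₀₎(α⁻¹(S(v₍₁₎))·m). -/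
open TensorProduct

noncomputable section

namespace GYD

variable (k H : Type) [Field k] [Ring H] [HopfAlgebra k H]

/-- `φ` is a Hopf algebra automorphism of `H` (a linear equivalence which is both an
algebra morphism and a coalgebra morphism). -/
def IsHopfAut (φ : H ≃ₗ[k] H) : Prop :=
  (∀ x y : H, φ (x * y) = φ x * φ y) ∧ (φ 1 = 1) ∧
  (∀ h : H, Coalgebra.comul (R := k) (φ h)
      = TensorProduct.map φ.toLinearMap φ.toLinearMap (Coalgebra.comul (R := k) h)) ∧
  (∀ h : H, Coalgebra.counit (R := k) (φ h) = Coalgebra.counit (R := k) h)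

/-- `Sinv` is a two-sided inverse of the antipode of `H`. -/
def IsAntipodeInv (Sinv : H → H) : Prop :=
  (∀ h : H, HopfAlgebra.antipode (R := k) (Sinv h) = h) ∧
  (∀ h : H, Sinv (HopfAlgebra.antipode (R := k) h) = h)

/-- The data `(act, coact)` makes `M` an `(α, β)`-Yetter-Drinfeld module over `H`:
`M` is a left `H`-module, a right `H`-comodule, and the compatibility
`(h·m)₍₀₎ ⊗ (h·m)₍₁₎ = h₂·m₍₀₎ ⊗ β(h₃) m₍₁₎ α(Sinv(h₁))` holds (expressed via
arbitrary finite representations of `(Δ ⊗ id)(Δ h)` and of `coact m`). -/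
def IsYD (Sinv α β : H → H) {M : Type} [AddCommGroup M] [Module k M]
    (act : H →ₗ[k] M →ₗ[k] M) (coact : M →ₗ[k] M ⊗[k] H) : Prop :=
  (∀ m : M, act 1 m = m) ∧
  (∀ (g h : H) (m : M), act (g * h) m = act g (act h m)) ∧
  (∀ m : M, LinearMap.rTensor H coact (coact m)
      = (TensorProduct.assoc k M H H).symm
          (LinearMap.lTensor M (Coalgebra.comul (R := k)) (coact m))) ∧
  (∀ m : M,
    TensorProduct.rid k M (LinearMap.lTensor M (Coalgebra.counit (R := k)) (coact m)) = m) ∧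
  (∀ (h : H) (m : M) (s t : Finset ℕ) (a b c : ℕ → H) (m₀ : ℕ → M) (m₁ : ℕ → H),
    LinearMap.rTensor H (Coalgebra.comul (R := k)) (Coalgebra.comul (R := k) h)
        = ∑ i ∈ s, (a i ⊗ₜ[k] b i) ⊗ₜ[k] c i →
    coact m = ∑ j ∈ t, m₀ j ⊗ₜ[k] m₁ j →
    coact (act h m) = ∑ i ∈ s, ∑ j ∈ t,
      act (b i) (m₀ j) ⊗ₜ[k] (β (c i) * m₁ j * α (Sinv (a i))))

/-- Characterization of the action `h · (m ⊗ n) = θ₁(h₁)·m ⊗ θ₂(h₂)·n` on `M ⊗ N`. -/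
def TensorActChar (θ₁ θ₂ : H → H) {M N : Type} [AddCommGroup M] [Module k M]
    [AddCommGroup N] [Module k N]
    (actM : H →ₗ[k] M →ₗ[k] M) (actN : H →ₗ[k] N →ₗ[k] N)
    (act : H →ₗ[k] (M ⊗[k] N) →ₗ[k] (M ⊗[k] N)) : Prop :=
  ∀ (h : H) (m : M) (n : N) (s : Finset ℕ) (p q : ℕ → H),
    Coalgebra.comul (R := k) h = ∑ i ∈ s, p i ⊗ₜ[k] q i →
    act h (m ⊗ₜ[k] n) = ∑ i ∈ s, actM (θ₁ (p i)) m ⊗ₜ[k] actN (θ₂ (q i)) n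

/-- Characterization of the "type two" action `h · (m ⊗ n) = h₂·m ⊗ h₁·n` on `M ⊗ N`. -/
def TensorActCharTwo {M N : Type} [AddCommGroup M] [Module k M]
    [AddCommGroup N] [Module k N]
    (actM : H →ₗ[k] M →ₗ[k] M) (actN : H →ₗ[k] N →ₗ[k] N)
    (act : H →ₗ[k] (M ⊗[k] N) →ₗ[k] (M ⊗[k] N)) : Prop :=
  ∀ (h : H) (m : M) (n : N) (s : Finset ℕ) (p q : ℕ → H),
    Coalgebra.comul (R := k) h = ∑ i ∈ s, p i ⊗ₜ[k] q i →
    act h (m ⊗ₜ[k] n) = ∑ i ∈ s, actM (q i) m ⊗ₜ[k] actN (p i) n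

/-- Characterization of the coaction `m ⊗ n ↦ (m₍₀₎ ⊗ n₍₀₎) ⊗ n₍₁₎ m₍₁₎` on `M ⊗ N`. -/
def TensorCoactChar {M N : Type} [AddCommGroup M] [Module k M]
    [AddCommGroup N] [Module k N]
    (coactM : M →ₗ[k] M ⊗[k] H) (coactN : N →ₗ[k] N ⊗[k] H)
    (coact : M ⊗[k] N →ₗ[k] (M ⊗[k] N) ⊗[k] H) : Prop :=
  ∀ (m : M) (n : N) (s t : Finset ℕ) (m₀ : ℕ → M) (m₁ : ℕ → H) (n₀ : ℕ → N) (n₁ : ℕ → H),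
    coactM m = ∑ i ∈ s, m₀ i ⊗ₜ[k] m₁ i →
    coactN n = ∑ j ∈ t, n₀ j ⊗ₜ[k] n₁ j →
    coact (m ⊗ₜ[k] n) = ∑ i ∈ s, ∑ j ∈ t, (m₀ i ⊗ₜ[k] n₀ j) ⊗ₜ[k] (n₁ j * m₁ i)

/-- Characterization of the "type two" coaction `m ⊗ n ↦ (m₍₀₎ ⊗ n₍₀₎) ⊗ m₍₁₎ n₍₁₎`. -/
def TensorCoactCharTwo {M N : Type} [AddCommGroup M] [Module k M]
    [AddCommGroup N] [Module k N]
    (coactM : M →ₗ[k] M ⊗[k] H) (coactN : N →ₗ[k] N ⊗[k] H)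
    (coact : M ⊗[k] N →ₗ[k] (M ⊗[k] N) ⊗[k] H) : Prop :=
  ∀ (m : M) (n : N) (s t : Finset ℕ) (m₀ : ℕ → M) (m₁ : ℕ → H) (n₀ : ℕ → N) (n₁ : ℕ → H),
    coactM m = ∑ i ∈ s, m₀ i ⊗ₜ[k] m₁ i →
    coactN n = ∑ j ∈ t, n₀ j ⊗ₜ[k] n₁ j →
    coact (m ⊗ₜ[k] n) = ∑ i ∈ s, ∑ j ∈ t, (m₀ i ⊗ₜ[k] n₀ j) ⊗ₜ[k] (m₁ i * n₁ j)

/-- Characterization of the action `(h · f)(m) = f (θ(h) · m)` on the dual space. -/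
def DualActChar (θ : H → H) {M : Type} [AddCommGroup M] [Module k M]
    (actM : H →ₗ[k] M →ₗ[k] M)
    (actD : H →ₗ[k] Module.Dual k M →ₗ[k] Module.Dual k M) : Prop :=
  ∀ (h : H) (f : Module.Dual k M) (m : M), actD h f m = f (actM (θ h) m)

/-- Characterization of the coaction `f₍₀₎(m) ⊗ f₍₁₎ = f(m₍₀₎) ⊗ σ(m₍₁₎)` on the dual space
(expressed through contraction against evaluation at each `m`). -/
def DualCoactChar (σ : H → H) {M : Type} [AddCommGroup M] [Module k M]
    (coactM : M →ₗ[k] M ⊗[k] H)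
    (coactD : Module.Dual k M →ₗ[k] Module.Dual k M ⊗[k] H) : Prop :=
  ∀ (f : Module.Dual k M) (m : M) (t : Finset ℕ) (m₀ : ℕ → M) (m₁ : ℕ → H),
    coactM m = ∑ j ∈ t, m₀ j ⊗ₜ[k] m₁ j →
    TensorProduct.lid k H (LinearMap.rTensor H (Module.Dual.eval k M m) (coactD f))
      = ∑ j ∈ t, f (m₀ j) • σ (m₁ j)

/-- Characterization of the action `(h · u)(m) = θ(h₁) · u (θ(S(h₂)) · m)` on `End(M)`. -/
def EndActChar (θ : H → H) {M : Type} [AddCommGroup M] [Module k M]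
    (actM : H →ₗ[k] M →ₗ[k] M)
    (actE : H →ₗ[k] Module.End k M →ₗ[k] Module.End k M) : Prop :=
  ∀ (h : H) (u : Module.End k M) (m : M) (s : Finset ℕ) (p q : ℕ → H),
    Coalgebra.comul (R := k) h = ∑ i ∈ s, p i ⊗ₜ[k] q i →
    actE h u m = ∑ i ∈ s,
      actM (θ (p i)) (u (actM (θ (HopfAlgebra.antipode (R := k) (q i))) m))

/-- Characterization of the coaction `u₍₀₎(m) ⊗ u₍₁₎ = u(m₍₀₎)₍₀₎ ⊗ Sinv(m₍₁₎) u(m₍₀₎)₍₁₎`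
on `End(M)`, expressed through contraction against evaluation at each `m`. -/
def EndCoactChar (Sinv : H → H) {M : Type} [AddCommGroup M] [Module k M]
    (coactM : M →ₗ[k] M ⊗[k] H)
    (coactE : Module.End k M →ₗ[k] Module.End k M ⊗[k] H) : Prop :=
  ∀ (u : Module.End k M) (m : M) (t : Finset ℕ) (m₀ : ℕ → M) (m₁ : ℕ → H)
    (r : ℕ → Finset ℕ) (n₀ : ℕ → ℕ → M) (n₁ : ℕ → ℕ → H),
    coactM m = ∑ j ∈ t, m₀ j ⊗ₜ[k] m₁ j →
    (∀ j ∈ t, coactM (u (m₀ j)) = ∑ l ∈ r j, n₀ j l ⊗ₜ[k] n₁ j l) →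
    LinearMap.rTensor H (LinearMap.applyₗ (R := k) m) (coactE u)
      = ∑ j ∈ t, ∑ l ∈ r j, n₀ j l ⊗ₜ[k] (Sinv (m₁ j) * n₁ j l)

/-- Characterization of the action `(h · u)(m) = θ(h₂) · u (θ(Sinv(h₁)) · m)` on `End(M)ᵒᵖ`. -/
def EndOpActChar (θ Sinv : H → H) {M : Type} [AddCommGroup M] [Module k M]
    (actM : H →ₗ[k] M →ₗ[k] M)
    (actE : H →ₗ[k] (Module.End k M)ᵐᵒᵖ →ₗ[k] (Module.End k M)ᵐᵒᵖ) : Prop :=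
  ∀ (h : H) (u : (Module.End k M)ᵐᵒᵖ) (m : M) (s : Finset ℕ) (p q : ℕ → H),
    Coalgebra.comul (R := k) h = ∑ i ∈ s, p i ⊗ₜ[k] q i →
    (actE h u).unop m = ∑ i ∈ s,
      actM (θ (q i)) (u.unop (actM (θ (Sinv (p i))) m))

/-- Characterization of the coaction `u₍₀₎(m) ⊗ u₍₁₎ = u(m₍₀₎)₍₀₎ ⊗ u(m₍₀₎)₍₁₎ S(m₍₁₎)`
on `End(M)ᵒᵖ`, expressed through contraction against evaluation at each `m`. -/
def EndOpCoactChar {M : Type} [AddCommGroup M] [Module k M]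
    (coactM : M →ₗ[k] M ⊗[k] H)
    (coactE : (Module.End k M)ᵐᵒᵖ →ₗ[k] (Module.End k M)ᵐᵒᵖ ⊗[k] H) : Prop :=
  ∀ (u : (Module.End k M)ᵐᵒᵖ) (m : M) (t : Finset ℕ) (m₀ : ℕ → M) (m₁ : ℕ → H)
    (r : ℕ → Finset ℕ) (n₀ : ℕ → ℕ → M) (n₁ : ℕ → ℕ → H),
    coactM m = ∑ j ∈ t, m₀ j ⊗ₜ[k] m₁ j →
    (∀ j ∈ t, coactM (u.unop (m₀ j)) = ∑ l ∈ r j, n₀ j l ⊗ₜ[k] n₁ j l) →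
    LinearMap.rTensor H ((LinearMap.applyₗ (R := k) m).comp
        (MulOpposite.opLinearEquiv k).symm.toLinearMap) (coactE u)
      = ∑ j ∈ t, ∑ l ∈ r j,
          n₀ j l ⊗ₜ[k] (n₁ j l * HopfAlgebra.antipode (R := k) (m₁ j))

/-- `A`, with the Yetter-Drinfeld structure `(act, coact)`, is an algebra in the braided
category of Yetter-Drinfeld modules over `H`. -/
def IsYDAlgebra (Sinv : H → H) {A : Type} [Ring A] [Algebra k A]
    (act : H →ₗ[k] A →ₗ[k] A) (coact : A →ₗ[k] A ⊗[k] H) : Prop :=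
  IsYD k H Sinv id id act coact ∧
  (∀ (h : H) (a b : A) (s : Finset ℕ) (p q : ℕ → H),
    Coalgebra.comul (R := k) h = ∑ i ∈ s, p i ⊗ₜ[k] q i →
    act h (a * b) = ∑ i ∈ s, act (p i) a * act (q i) b) ∧
  (∀ h : H, act h 1 = Coalgebra.counit (R := k) h • (1 : A)) ∧
  (coact 1 = (1 : A) ⊗ₜ[k] (1 : H)) ∧
  (∀ (a b : A) (s t : Finset ℕ) (a₀ : ℕ → A) (a₁ : ℕ → H) (b₀ : ℕ → A) (b₁ : ℕ → H),
    coact a = ∑ i ∈ s, a₀ i ⊗ₜ[k] a₁ i →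
    coact b = ∑ j ∈ t, b₀ j ⊗ₜ[k] b₁ j →
    coact (a * b) = ∑ i ∈ s, ∑ j ∈ t, (a₀ i * b₀ j) ⊗ₜ[k] (b₁ j * a₁ i))

/-- Characterization of the smash product multiplication
`(a # b)(a' # b') = a a'₍₀₎ # (a'₍₁₎ · b) b'` on `A ⊗ B`. -/
def SmashMulChar {A B : Type} [Ring A] [Algebra k A] [Ring B] [Algebra k B]
    (actB : H →ₗ[k] B →ₗ[k] B) (coactA : A →ₗ[k] A ⊗[k] H)
    (mul : (A ⊗[k] B) →ₗ[k] (A ⊗[k] B) →ₗ[k] (A ⊗[k] B)) : Prop :=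
  ∀ (a a' : A) (b b' : B) (t : Finset ℕ) (a₀ : ℕ → A) (a₁ : ℕ → H),
    coactA a' = ∑ j ∈ t, a₀ j ⊗ₜ[k] a₁ j →
    mul (a ⊗ₜ[k] b) (a' ⊗ₜ[k] b') = ∑ j ∈ t, (a * a₀ j) ⊗ₜ[k] (actB (a₁ j) b * b')

end GYD

namespace GYDProof

open Coalgebra WithConv

section Reps

variable {k : Type} [Field k]

theorem exists_rep {M N : Type} [AddCommGroup M] [Module k M] [AddCommGroup N] [Module k N]
    (x : M ⊗[k] N) : ∃ (s : Finset ℕ) (a : ℕ → M) (b : ℕ → N), x = ∑ i ∈ s, a i ⊗ₜ[k] b i := by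
  suffices h : ∃ (n : ℕ) (a : ℕ → M) (b : ℕ → N), x = ∑ i ∈ Finset.range n, a i ⊗ₜ[k] b i by
    obtain ⟨n, a, b, h⟩ := h
    exact ⟨_, a, b, h⟩
  induction x with
  | zero => exact ⟨0, 0, 0, by simp⟩
  | tmul m n => exact ⟨1, fun _ => m, fun _ => n, by simp⟩
  | add x y hx hy =>
    obtain ⟨n, a, b, h⟩ := hx
    obtain ⟨n', a', b', h'⟩ := hy
    refine ⟨n + n', fun i => if i < n then a i else a' (i - n),
      fun i => if i < n then b i else b' (i - n), ?_⟩
    rw [Finset.sum_range_add, h, h']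
    congr 1
    · refine Finset.sum_congr rfl fun i hi => ?_
      have := Finset.mem_range.1 hi
      simp [this]
    · simp

theorem exists_rep3 {M N P : Type} [AddCommGroup M] [Module k M] [AddCommGroup N] [Module k N]
    [AddCommGroup P] [Module k P]
    (x : (M ⊗[k] N) ⊗[k] P) : ∃ (s : Finset ℕ) (a : ℕ → M) (b : ℕ → N) (c : ℕ → P),
      x = ∑ i ∈ s, (a i ⊗ₜ[k] b i) ⊗ₜ[k] c i := by
  suffices h : ∃ (n : ℕ) (a : ℕ → M) (b : ℕ → N) (c : ℕ → P),
      x = ∑ i ∈ Finset.range n, (a i ⊗ₜ[k] b i) ⊗ₜ[k] c i by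
    obtain ⟨n, a, b, c, h⟩ := h
    exact ⟨_, a, b, c, h⟩
  have key : ∀ x y : (M ⊗[k] N) ⊗[k] P,
      (∃ (n : ℕ) (a : ℕ → M) (b : ℕ → N) (c : ℕ → P),
        x = ∑ i ∈ Finset.range n, (a i ⊗ₜ[k] b i) ⊗ₜ[k] c i) →
      (∃ (n : ℕ) (a : ℕ → M) (b : ℕ → N) (c : ℕ → P),
        y = ∑ i ∈ Finset.range n, (a i ⊗ₜ[k] b i) ⊗ₜ[k] c i) →
      (∃ (n : ℕ) (a : ℕ → M) (b : ℕ → N) (c : ℕ → P),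
        x + y = ∑ i ∈ Finset.range n, (a i ⊗ₜ[k] b i) ⊗ₜ[k] c i) := by
    rintro x y ⟨n, a, b, c, h⟩ ⟨n', a', b', c', h'⟩
    refine ⟨n + n', fun i => if i < n then a i else a' (i - n),
      fun i => if i < n then b i else b' (i - n),
      fun i => if i < n then c i else c' (i - n), ?_⟩
    rw [Finset.sum_range_add, h, h']
    congr 1
    · refine Finset.sum_congr rfl fun i hi => ?_
      have := Finset.mem_range.1 hi
      simp [this]
    · simp
  induction x with
  | zero => exact ⟨0, 0, 0, 0, by simp⟩
  | tmul y p =>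
    induction y with
    | zero => exact ⟨0, 0, 0, 0, by simp⟩
    | tmul m n => exact ⟨1, fun _ => m, fun _ => n, fun _ => p, by simp⟩
    | add x y hx hy => rw [TensorProduct.add_tmul]; exact key _ _ hx hy
  | add x y hx hy => exact key _ _ hx hy

end Reps

section Conv

variable {k H A : Type} [Field k] [Ring H] [HopfAlgebra k H] [Ring A] [Algebra k A]

theorem conv_rep (F G : WithConv (H →ₗ[k] A)) (h : H) (s : Finset ℕ) (p q : ℕ → H)
    (hh : comul (R := k) h = ∑ i ∈ s, p i ⊗ₜ[k] q i) :
    (F * G).ofConv h = ∑ i ∈ s, F.ofConv (p i) * G.ofConv (q i) := by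
  have := LinearMap.convMul_apply F G h
  simp only [hh, map_sum, TensorProduct.map_tmul, LinearMap.mul'_apply] at this
  exact this

theorem conv_rep3 (F G K : WithConv (H →ₗ[k] A)) (h : H) (s : Finset ℕ) (a b c : ℕ → H)
    (hh : LinearMap.rTensor H (comul (R := k)) (comul (R := k) h)
      = ∑ i ∈ s, (a i ⊗ₜ[k] b i) ⊗ₜ[k] c i) :
    (F * G * K).ofConv h = ∑ i ∈ s, F.ofConv (a i) * G.ofConv (b i) * K.ofConv (c i) := by
  have h1 : (F * G * K).ofConv h = LinearMap.mul' k A (TensorProduct.map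
      (LinearMap.mul' k A ∘ₗ TensorProduct.map F.ofConv G.ofConv) K.ofConv
      (LinearMap.rTensor H (comul (R := k)) (comul (R := k) h))) := by
    have := LinearMap.convMul_apply (F * G) K h
    refine this.trans ?_
    rw [LinearMap.convMul_def]
    congr 1
    generalize comul (R := k) h = t
    induction t with
    | zero => simp
    | tmul x y => simp
    | add x y hx hy => simp only [map_add, hx, hy]
  rw [h1, hh]
  simp

/-- the constant function in the convolution algebra -/
def cst (b : A) : WithConv (H →ₗ[k] A) := toConv ((counit (R := k) (A := H)).smulRight b)

theorem cst_mul_apply (b : A) (F : WithConv (H →ₗ[k] A)) (h : H) :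
    (cst b * F).ofConv h = b * F.ofConv h := by
  obtain ⟨s, p, q, hh⟩ := exists_rep (comul (R := k) h)
  rw [conv_rep _ _ h s p q hh]
  have := congrArg (LinearMap.mul' k A ∘ₗ
    TensorProduct.map (LinearMap.toSpanSingleton k A b) F.ofConv)
    (Coalgebra.rTensor_counit_comul (R := k) h)
  rw [hh] at this
  simpa [cst] using this

theorem mul_cst_apply (b : A) (F : WithConv (H →ₗ[k] A)) (h : H) :
    (F * cst b).ofConv h = F.ofConv h * b := by
  obtain ⟨s, p, q, hh⟩ := exists_rep (comul (R := k) h)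
  rw [conv_rep _ _ h s p q hh]
  have := congrArg (LinearMap.mul' k A ∘ₗ
    TensorProduct.map F.ofConv (LinearMap.toSpanSingleton k A b))
    (Coalgebra.lTensor_counit_comul (R := k) h)
  rw [hh] at this
  simpa [cst] using this

theorem cst_mul_cst (b b' : A) : (cst b * cst b' : WithConv (H →ₗ[k] A)) = cst (b * b') := by
  ext h
  have := cst_mul_apply (k := k) b (cst b') h
  refine this.trans ?_
  simp [cst]

theorem cst_one : (cst 1 : WithConv (H →ₗ[k] A)) = 1 := by
  ext h
  simp [cst, Algebra.algebraMap_eq_smul_one]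

theorem conv_ext {F G : WithConv (H →ₗ[k] A)} (h : ∀ x, F.ofConv x = G.ofConv x) : F = G := by
  ext x; exact h x

/-- an algebra map composed with the antipode is a convolution inverse -/
theorem conv_antipode_right (f : H →ₗ[k] A) (f1 : f 1 = 1) (fm : ∀ x y, f (x * y) = f x * f y) :
    toConv f * toConv (f ∘ₗ HopfAlgebra.antipode k) = 1 := by
  refine conv_ext fun h => ?_
  obtain ⟨s, p, q, hh⟩ := exists_rep (comul (R := k) h)
  rw [conv_rep _ _ h s p q hh]
  have := congrArg f (HopfAlgebra.mul_antipode_lTensor_comul_apply (R := k) h)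
  rw [hh] at this
  simp only [map_sum, LinearMap.lTensor_tmul, LinearMap.mul'_apply, fm] at this
  refine Eq.trans ?_ (this.trans ?_)
  · rfl
  · rw [Algebra.algebraMap_eq_smul_one, map_smul, f1, LinearMap.convOne_def]
    simp [Algebra.algebraMap_eq_smul_one]

theorem conv_antipode_left (f : H →ₗ[k] A) (f1 : f 1 = 1) (fm : ∀ x y, f (x * y) = f x * f y) :
    toConv (f ∘ₗ HopfAlgebra.antipode k) * toConv f = 1 := by
  refine conv_ext fun h => ?_
  obtain ⟨s, p, q, hh⟩ := exists_rep (comul (R := k) h)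
  rw [conv_rep _ _ h s p q hh]
  have := congrArg f (HopfAlgebra.mul_antipode_rTensor_comul_apply (R := k) h)
  rw [hh] at this
  simp only [map_sum, LinearMap.rTensor_tmul, LinearMap.mul'_apply, fm] at this
  refine Eq.trans ?_ (this.trans ?_)
  · rfl
  · rw [Algebra.algebraMap_eq_smul_one, map_smul, f1, LinearMap.convOne_def]
    simp [Algebra.algebraMap_eq_smul_one]

theorem antipode_mul' (x y : H) : HopfAlgebra.antipode k (x * y)
    = HopfAlgebra.antipode k y * HopfAlgebra.antipode k x := by
  let S : H →ₗ[k] H := HopfAlgebra.antipode k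
  let a : WithConv (H ⊗[k] H →ₗ[k] H) := toConv (S ∘ₗ LinearMap.mul' k H)
  let b : WithConv (H ⊗[k] H →ₗ[k] H) := toConv (LinearMap.mul' k H)
  let c : WithConv (H ⊗[k] H →ₗ[k] H) := toConv (LinearMap.mul' k H ∘ₗ
    TensorProduct.map S S ∘ₗ (TensorProduct.comm k H H).toLinearMap)
  have rep : ∀ (x y : H) (F G : WithConv (H ⊗[k] H →ₗ[k] H)) (s t : Finset ℕ) (p q r u : ℕ → H),
      comul (R := k) x = ∑ i ∈ s, p i ⊗ₜ[k] q i → comul (R := k) y = ∑ i ∈ t, r i ⊗ₜ[k] u i →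
      (F * G).ofConv (x ⊗ₜ y) = ∑ i ∈ s, ∑ l ∈ t,
        F.ofConv (p i ⊗ₜ r l) * G.ofConv (q i ⊗ₜ u l) := by
    intro x y F G s t p q r u hx hy
    have := LinearMap.convMul_apply F G (x ⊗ₜ[k] y)
    refine this.trans ?_
    rw [TensorProduct.comul_tmul, hx, hy]
    simp [TensorProduct.sum_tmul, TensorProduct.tmul_sum]
    rw [Finset.sum_comm]
  have hab : a * b = 1 := by
    apply WithConv.ext
    ext x y
    obtain ⟨s, p, q, hx⟩ := exists_rep (comul (R := k) x)
    obtain ⟨t, r, u, hy⟩ := exists_rep (comul (R := k) y)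
    simp only [TensorProduct.AlgebraTensorModule.curry_apply, LinearMap.restrictScalars_self,
      TensorProduct.curry_apply]
    rw [rep x y a b s t p q r u hx hy]
    have := HopfAlgebra.mul_antipode_rTensor_comul_apply (R := k) (x * y)
    rw [Bialgebra.comul_mul, hx, hy] at this
    simp only [Finset.sum_mul_sum, Algebra.TensorProduct.tmul_mul_tmul, map_sum,
      LinearMap.rTensor_tmul, LinearMap.mul'_apply] at this
    simp only [a, b, S, LinearMap.comp_apply, LinearMap.mul'_apply]
    rw [this, LinearMap.convOne_def]
    simp
    exact Algebra.commutes _ _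
  have hbc : b * c = 1 := by
    apply WithConv.ext
    ext x y
    obtain ⟨s, p, q, hx⟩ := exists_rep (comul (R := k) x)
    obtain ⟨t, r, u, hy⟩ := exists_rep (comul (R := k) y)
    simp only [TensorProduct.AlgebraTensorModule.curry_apply, LinearMap.restrictScalars_self,
      TensorProduct.curry_apply]
    rw [rep x y b c s t p q r u hx hy]
    have e1 := HopfAlgebra.mul_antipode_lTensor_comul_apply (R := k) x
    have e2 := HopfAlgebra.mul_antipode_lTensor_comul_apply (R := k) y
    rw [hx] at e1
    rw [hy] at e2
    simp only [map_sum, LinearMap.lTensor_tmul, LinearMap.mul'_apply] at e1 e2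
    have : ∀ i ∈ s, ∑ l ∈ t, b.ofConv (p i ⊗ₜ r l) * c.ofConv (q i ⊗ₜ u l)
        = counit (R := k) y • (p i * S (q i)) := by
      intro i _
      have : ∀ l ∈ t, b.ofConv (p i ⊗ₜ r l) * c.ofConv (q i ⊗ₜ u l)
          = p i * (r l * S (u l)) * S (q i) := by
        intro l _
        simp [b, c, mul_assoc]
      rw [Finset.sum_congr rfl this, ← Finset.sum_mul, ← Finset.mul_sum, e2,
        Algebra.algebraMap_eq_smul_one]
      simp
    rw [Finset.sum_congr rfl this, ← Finset.smul_sum, e1, LinearMap.convOne_def]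
    simp [Algebra.algebraMap_eq_smul_one, smul_smul, mul_comm]
  have hac : a = c := left_inv_eq_right_inv hab hbc
  have := congrArg (fun F : WithConv (H ⊗[k] H →ₗ[k] H) => F.ofConv (x ⊗ₜ y)) hac
  simpa [a, c, S] using this

end Conv

section SinvSec

variable {k H A : Type} [Field k] [Ring H] [HopfAlgebra k H] [Ring A] [Algebra k A]

/-- the inverse of the antipode as a linear map -/
def SinvL (Sinv : H → H) (hS : GYD.IsAntipodeInv k H Sinv) : H →ₗ[k] H where
  toFun := Sinv
  map_add' x y := by
    conv_lhs => rw [← hS.1 x, ← hS.1 y, ← map_add, hS.2]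
  map_smul' c x := by
    conv_lhs => rw [← hS.1 x, ← map_smul, hS.2]
    rfl

theorem S_inj {Sinv : H → H} (hS : GYD.IsAntipodeInv k H Sinv) {x y : H}
    (h : HopfAlgebra.antipode k x = HopfAlgebra.antipode k y) : x = y := by
  rw [← hS.2 x, h, hS.2]

theorem sum_Sinv_mul {Sinv : H → H} (hS : GYD.IsAntipodeInv k H Sinv) (h : H) (s : Finset ℕ)
    (p q : ℕ → H) (hh : comul (R := k) h = ∑ i ∈ s, p i ⊗ₜ[k] q i) :
    ∑ i ∈ s, Sinv (q i) * p i = counit (R := k) h • (1 : H) := by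
  apply S_inj hS
  have := HopfAlgebra.mul_antipode_rTensor_comul_apply (R := k) h
  rw [hh] at this
  simp only [map_sum, LinearMap.rTensor_tmul, LinearMap.mul'_apply] at this
  simp only [map_sum, antipode_mul', hS.1, map_smul, HopfAlgebra.antipode_one]
  rw [this, Algebra.algebraMap_eq_smul_one]

theorem sum_mul_Sinv {Sinv : H → H} (hS : GYD.IsAntipodeInv k H Sinv) (h : H) (s : Finset ℕ)
    (p q : ℕ → H) (hh : comul (R := k) h = ∑ i ∈ s, p i ⊗ₜ[k] q i) :
    ∑ i ∈ s, q i * Sinv (p i) = counit (R := k) h • (1 : H) := by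
  apply S_inj hS
  have := HopfAlgebra.mul_antipode_lTensor_comul_apply (R := k) h
  rw [hh] at this
  simp only [map_sum, LinearMap.lTensor_tmul, LinearMap.mul'_apply] at this
  simp only [map_sum, antipode_mul', hS.1, map_smul, HopfAlgebra.antipode_one]
  rw [this, Algebra.algebraMap_eq_smul_one]

theorem conv_Sinv_right {Sinv : H → H} (hS : GYD.IsAntipodeInv k H Sinv) (f : H →ₗ[k] A)
    (f1 : f 1 = 1) (fm : ∀ x y, f (x * y) = f y * f x) :
    toConv f * toConv (f ∘ₗ SinvL Sinv hS) = 1 := by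
  refine conv_ext fun h => ?_
  obtain ⟨s, p, q, hh⟩ := exists_rep (comul (R := k) h)
  rw [conv_rep _ _ h s p q hh]
  have := congrArg f (sum_Sinv_mul hS h s p q hh)
  simp only [map_sum, fm, map_smul, f1] at this
  refine Eq.trans ?_ (this.trans ?_)
  · rfl
  · rw [LinearMap.convOne_def]
    simp [Algebra.algebraMap_eq_smul_one]

theorem conv_Sinv_left {Sinv : H → H} (hS : GYD.IsAntipodeInv k H Sinv) (f : H →ₗ[k] A)
    (f1 : f 1 = 1) (fm : ∀ x y, f (x * y) = f y * f x) :
    toConv (f ∘ₗ SinvL Sinv hS) * toConv f = 1 := by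
  refine conv_ext fun h => ?_
  obtain ⟨s, p, q, hh⟩ := exists_rep (comul (R := k) h)
  rw [conv_rep _ _ h s p q hh]
  have := congrArg f (sum_mul_Sinv hS h s p q hh)
  simp only [map_sum, fm, map_smul, f1] at this
  refine Eq.trans ?_ (this.trans ?_)
  · rfl
  · rw [LinearMap.convOne_def]
    simp [Algebra.algebraMap_eq_smul_one]

theorem hopfAut_symm {φ : H ≃ₗ[k] H} (hφ : GYD.IsHopfAut k H φ) :
    GYD.IsHopfAut k H φ.symm := by
  obtain ⟨h1, h2, h3, h4⟩ := hφ
  refine ⟨fun x y => ?_, ?_, fun h => ?_, fun h => ?_⟩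
  · apply φ.injective; simp [h1]
  · apply φ.injective; simp [h2]
  · have := h3 (φ.symm h)
    rw [φ.apply_symm_apply] at this
    rw [this, ← LinearMap.comp_apply, ← TensorProduct.map_comp]
    simp
  · have := h4 (φ.symm h)
    rw [φ.apply_symm_apply] at this
    exact this.symm

theorem hopfAut_trans {φ ψ : H ≃ₗ[k] H} (hφ : GYD.IsHopfAut k H φ) (hψ : GYD.IsHopfAut k H ψ) :
    GYD.IsHopfAut k H (φ.trans ψ) := by
  obtain ⟨h1, h2, h3, h4⟩ := hφ
  obtain ⟨g1, g2, g3, g4⟩ := hψ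
  refine ⟨fun x y => ?_, ?_, fun h => ?_, fun h => ?_⟩
  · simp [h1, g1]
  · simp [h2, g2]
  · simp only [LinearEquiv.trans_apply, g3, h3]
    rw [← LinearMap.comp_apply, ← TensorProduct.map_comp]
    rfl
  · simp [g4, h4]

theorem hopfAut_rep {φ : H ≃ₗ[k] H} (hφ : GYD.IsHopfAut k H φ) (h : H) (s : Finset ℕ)
    (p q : ℕ → H) (hh : comul (R := k) h = ∑ i ∈ s, p i ⊗ₜ[k] q i) :
    comul (R := k) (φ h) = ∑ i ∈ s, φ (p i) ⊗ₜ[k] φ (q i) := by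
  rw [hφ.2.2.1, hh]
  simp

theorem hopfAut_antipode {φ : H ≃ₗ[k] H} (hφ : GYD.IsHopfAut k H φ) (h : H) :
    φ (HopfAlgebra.antipode k h) = HopfAlgebra.antipode k (φ h) := by
  have e1 := conv_antipode_right φ.toLinearMap hφ.2.1 hφ.1
  have e2 : toConv (HopfAlgebra.antipode k ∘ₗ φ.toLinearMap) * toConv φ.toLinearMap = 1 := by
    refine conv_ext fun h => ?_
    obtain ⟨s, p, q, hh⟩ := exists_rep (comul (R := k) h)
    rw [conv_rep _ _ h s p q hh]
    have := HopfAlgebra.mul_antipode_rTensor_comul_apply (R := k) (φ h)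
    rw [hopfAut_rep hφ h s p q hh, hφ.2.2.2] at this
    simp only [map_sum, LinearMap.rTensor_tmul, LinearMap.mul'_apply] at this
    exact this
  have := left_inv_eq_right_inv e2 e1
  exact (congrArg (fun F : WithConv (H →ₗ[k] H) => F.ofConv h) this).symm

theorem hopfAut_Sinv {Sinv : H → H} (hS : GYD.IsAntipodeInv k H Sinv)
    {φ : H ≃ₗ[k] H} (hφ : GYD.IsHopfAut k H φ) (h : H) :
    φ (Sinv h) = Sinv (φ h) := by
  apply S_inj hS
  rw [← hopfAut_antipode hφ, hS.1, hS.1]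

end SinvSec

section Ops

variable {k H M X : Type} [Field k] [Ring H] [HopfAlgebra k H] [AddCommGroup M] [Module k M]
  [AddCommGroup X] [Module k X]

/-- the operator `m ⊗ x ↦ m₀ ⊗ P(m₁) x` -/
def eP (coact : M →ₗ[k] M ⊗[k] H) (P : H →ₗ[k] Module.End k X) : Module.End k (M ⊗[k] X) :=
  TensorProduct.lift (((LinearMap.lcomp k (M ⊗[k] X) coact) ∘ₗ
    (LinearMap.lTensorHom M) ∘ₗ P.flip).flip)

theorem eP_tmul (coact : M →ₗ[k] M ⊗[k] H) (P : H →ₗ[k] Module.End k X) (m : M) (x : X) :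
    eP coact P (m ⊗ₜ x) = LinearMap.lTensor M (P.flip x) (coact m) := rfl

theorem eP_one (coact : M →ₗ[k] M ⊗[k] H)
    (hcu : ∀ m : M, TensorProduct.rid k M (LinearMap.lTensor M (counit (R := k)) (coact m)) = m) :
    eP (X := X) coact (1 : WithConv (H →ₗ[k] Module.End k X)).ofConv = 1 := by
  ext m x
  simp only [TensorProduct.AlgebraTensorModule.curry_apply, LinearMap.restrictScalars_self,
      TensorProduct.curry_apply, eP_tmul]
  have : ∀ t : M ⊗[k] H, LinearMap.lTensor M
      ((1 : WithConv (H →ₗ[k] Module.End k X)).ofConv.flip x) t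
      = TensorProduct.rid k M (LinearMap.lTensor M (counit (R := k)) t) ⊗ₜ x := by
    intro t
    induction t with
    | zero => simp
    | tmul m h => simp [LinearMap.convOne_def, Algebra.algebraMap_eq_smul_one,
        TensorProduct.smul_tmul]
    | add x y hx hy => simp only [map_add, hx, hy, TensorProduct.add_tmul]
  rw [this, hcu]
  rfl

theorem eP_mul (coact : M →ₗ[k] M ⊗[k] H)
    (hco : ∀ m : M, LinearMap.rTensor H coact (coact m)
      = (TensorProduct.assoc k M H H).symm
          (LinearMap.lTensor M (comul (R := k)) (coact m)))
    (P Q : WithConv (H →ₗ[k] Module.End k X)) :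
    eP coact P.ofConv * eP coact Q.ofConv = eP coact (P * Q).ofConv := by
  ext m x
  simp only [TensorProduct.AlgebraTensorModule.curry_apply, LinearMap.restrictScalars_self,
      TensorProduct.curry_apply, eP_tmul, Module.End.mul_apply]
  let L : M ⊗[k] (H ⊗[k] H) →ₗ[k] M ⊗[k] X := LinearMap.lTensor M
    ((LinearMap.mul' k (Module.End k X) ∘ₗ TensorProduct.map P.ofConv Q.ofConv).flip x)
  have e1 : ∀ t : M ⊗[k] H, eP coact P.ofConv (LinearMap.lTensor M (Q.ofConv.flip x) t)
      = L (TensorProduct.assoc k M H H (LinearMap.rTensor H coact t)) := by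
    intro t
    induction t with
    | zero => simp
    | add x y hx hy => simp only [map_add, hx, hy]
    | tmul m h =>
      simp only [LinearMap.lTensor_tmul, eP_tmul, LinearMap.rTensor_tmul]
      generalize coact m = t
      induction t with
      | zero => simp
      | add x y hx hy => simp only [map_add, hx, hy, TensorProduct.add_tmul]
      | tmul m' h' => simp [L]
  have e2 : ∀ t : M ⊗[k] H, LinearMap.lTensor M ((P * Q).ofConv.flip x) t
      = L (LinearMap.lTensor M (comul (R := k)) t) := by
    intro t
    induction t with
    | zero => simp
    | add x y hx hy => simp only [map_add, hx, hy]
    | tmul m h =>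
      simp [L, LinearMap.convMul_def]
  rw [e1, e2, hco]
  simp

/-- right multiplication -/
def rm (k : Type) (A : Type) [Field k] [Ring A] [Algebra k A] : A →ₗ[k] Module.End k A :=
  (LinearMap.mul k A).flip

theorem rm_apply {A : Type} [Ring A] [Algebra k A] (a x : A) : rm k A a x = x * a := rfl

/-- `u ↦ u ⊗ 1` -/
def eU (k M X : Type) [Field k] [AddCommGroup M] [Module k M] [AddCommGroup X] [Module k X] :
    Module.End k M →ₗ[k] Module.End k (M ⊗[k] X) := LinearMap.rTensorHom X

theorem eU_tmul (u : Module.End k M) (m : M) (x : X) : eU k M X u (m ⊗ₜ x) = u m ⊗ₜ x := rfl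

theorem eU_mul (u v : Module.End k M) : eU k M X (u * v) = eU k M X u * eU k M X v := by
  ext m x; rfl

theorem eU_one : eU k M X 1 = 1 := by
  ext m x; rfl

/-- `a ↦ 1 ⊗ (right multiplication by a)` -/
def eJ (k M A : Type) [Field k] [AddCommGroup M] [Module k M] [Ring A] [Algebra k A] :
    A →ₗ[k] Module.End k (M ⊗[k] A) := LinearMap.lTensorHom M ∘ₗ rm k A

variable {A : Type} [Ring A] [Algebra k A]

theorem eJ_tmul (a : A) (m : M) (x : A) : eJ k M A a (m ⊗ₜ x) = m ⊗ₜ (x * a) := rfl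

theorem eJ_mul (a b : A) : eJ k M A (a * b) = eJ k M A b * eJ k M A a := by
  ext m x; simp [eJ_tmul, mul_assoc]

theorem eJ_one : eJ k M A 1 = 1 := by
  ext m x; simp [eJ_tmul]

theorem eU_eJ (u : Module.End k M) (a : A) :
    eU k M A u * eJ k M A a = eJ k M A a * eU k M A u := by
  ext m x; rfl

/-- `u ⊗ a ↦ (m ⊗ x ↦ u m ⊗ x a)` -/
def io (k M A : Type) [Field k] [AddCommGroup M] [Module k M] [Ring A] [Algebra k A] :
    Module.End k M ⊗[k] A →ₗ[k] Module.End k (M ⊗[k] A) :=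
  TensorProduct.lift ((LinearMap.mul k (Module.End k (M ⊗[k] A))).compl₁₂ (eU k M A) (eJ k M A))

theorem io_tmul (u : Module.End k M) (a : A) :
    io k M A (u ⊗ₜ a) = eU k M A u * eJ k M A a := rfl

theorem io_tmul_tmul (u : Module.End k M) (a : A) (m : M) (x : A) :
    io k M A (u ⊗ₜ a) (m ⊗ₜ x) = u m ⊗ₜ (x * a) := rfl

theorem io_left (W : Module.End k M ⊗[k] A) (y : A) (t : M ⊗[k] A) :
    io k M A W (LinearMap.lTensor M (LinearMap.mulLeft k y) t)
      = LinearMap.lTensor M (LinearMap.mulLeft k y) (io k M A W t) := by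
  induction W with
  | zero => simp
  | add x y hx hy => simp only [map_add, hx, hy, LinearMap.add_apply]
  | tmul u a =>
    induction t with
    | zero => simp
    | add x y hx hy => simp only [map_add, hx, hy]
    | tmul m x => simp [io_tmul_tmul, mul_assoc]

theorem io_eval (W : Module.End k M ⊗[k] A) (m : M) :
    io k M A W (m ⊗ₜ 1) = LinearMap.rTensor A (LinearMap.applyₗ (R := k) m) W := by
  induction W with
  | zero => simp
  | add x y hx hy => simp only [map_add, hx, hy, LinearMap.add_apply]
  | tmul u a => simp [io_tmul_tmul]

theorem eval_inj [FiniteDimensional k M] {V W : Module.End k M ⊗[k] X}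
    (h : ∀ m, LinearMap.rTensor X (LinearMap.applyₗ (R := k) m) V
      = LinearMap.rTensor X (LinearMap.applyₗ (R := k) m) W) : V = W := by
  apply (rTensorHomEquivHomRTensor k M M X).injective
  have key : ∀ (W : Module.End k M ⊗[k] X) (m : M), rTensorHomEquivHomRTensor k M M X W m =
      LinearMap.rTensor X (LinearMap.applyₗ (R := k) m) W := by
    intro W m
    rw [rTensorHomEquivHomRTensor_apply]
    induction W with
    | zero => simp
    | add x y hx hy => simp only [map_add, hx, hy, LinearMap.add_apply]
    | tmul u a => simp
  ext m
  rw [key, key, h]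

theorem io_inj [FiniteDimensional k M] {V W : Module.End k M ⊗[k] A}
    (h : io k M A V = io k M A W) : V = W := by
  apply eval_inj
  intro m
  rw [← io_eval, h, io_eval]

end Ops

section Main

variable {k H M : Type} [Field k] [Ring H] [HopfAlgebra k H] [AddCommGroup M] [Module k M]
variable {Sinv : H → H}

/-- comodule axioms -/
def IsComod (coact : M →ₗ[k] M ⊗[k] H) : Prop :=
  (∀ m : M, LinearMap.rTensor H coact (coact m)
      = (TensorProduct.assoc k M H H).symm
          (LinearMap.lTensor M (comul (R := k)) (coact m))) ∧
  (∀ m : M, TensorProduct.rid k M (LinearMap.lTensor M (counit (R := k)) (coact m)) = m)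

theorem eP_inv {X : Type} [AddCommGroup X] [Module k X] {coact : M →ₗ[k] M ⊗[k] H}
    (hc : IsComod coact) (P Q : H →ₗ[k] Module.End k X) (h : toConv P * toConv Q = 1) :
    eP coact P * eP coact Q = 1 := by
  have := eP_mul coact hc.1 (toConv P) (toConv Q)
  rw [h, eP_one coact hc.2] at this
  exact this

/-- the operator `m ⊗ g ↦ m₀ ⊗ g m₁` -/
def opR (coact : M →ₗ[k] M ⊗[k] H) : Module.End k (M ⊗[k] H) := eP coact (rm k H)

/-- the operator `m ⊗ g ↦ m₀ ⊗ g S⁻¹(m₁)` -/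
def opRi (hS : GYD.IsAntipodeInv k H Sinv) (coact : M →ₗ[k] M ⊗[k] H) :
    Module.End k (M ⊗[k] H) := eP coact (rm k H ∘ₗ SinvL Sinv hS)

theorem opR_opRi (hS : GYD.IsAntipodeInv k H Sinv) {coact : M →ₗ[k] M ⊗[k] H}
    (hc : IsComod coact) : opR coact * opRi hS coact = 1 := by
  refine eP_inv hc _ _ (conv_Sinv_right hS (rm k H) ?_ ?_)
  · ext x; simp [rm_apply]
  · intro x y; ext z; simp [rm_apply, mul_assoc]

theorem opRi_opR (hS : GYD.IsAntipodeInv k H Sinv) {coact : M →ₗ[k] M ⊗[k] H}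
    (hc : IsComod coact) : opRi hS coact * opR coact = 1 := by
  refine eP_inv hc _ _ (conv_Sinv_left hS (rm k H) ?_ ?_)
  · ext x; simp [rm_apply]
  · intro x y; ext z; simp [rm_apply, mul_assoc]

theorem opR_one (coact : M →ₗ[k] M ⊗[k] H) (m : M) : opR coact (m ⊗ₜ 1) = coact m := by
  rw [opR, eP_tmul]
  have : (rm k H).flip 1 = LinearMap.id := by ext x; simp [rm_apply]
  rw [this]
  simp

theorem io_coactE (hS : GYD.IsAntipodeInv k H Sinv) {coact : M →ₗ[k] M ⊗[k] H}
    {coactE : Module.End k M →ₗ[k] Module.End k M ⊗[k] H}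
    (hE : GYD.EndCoactChar k H Sinv coact coactE) (u : Module.End k M) :
    io k M H (coactE u) = opR coact * eU k M H u * opRi hS coact := by
  ext m g
  simp only [TensorProduct.AlgebraTensorModule.curry_apply, LinearMap.restrictScalars_self,
      TensorProduct.curry_apply, Module.End.mul_apply]
  obtain ⟨t, m₀, m₁, hm⟩ := exists_rep (coact m)
  choose r n₀ n₁ hn using fun j => exists_rep (coact (u (m₀ j)))
  have h1 := hE u m t m₀ m₁ r n₀ n₁ hm (fun j _ => hn j)
  have h2 := io_left (coactE u) g (m ⊗ₜ 1)
  simp only [LinearMap.lTensor_tmul, LinearMap.mulLeft_apply, mul_one] at h2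
  rw [h2, io_eval, h1, opRi, eP_tmul, hm]
  simp only [map_sum, LinearMap.lTensor_tmul, eU_tmul, opR, eP_tmul, hn]
  refine Finset.sum_congr rfl fun j _ => Finset.sum_congr rfl fun l _ => ?_
  simp [rm_apply, SinvL, mul_assoc]

theorem coact_apply (hS : GYD.IsAntipodeInv k H Sinv) {coact : M →ₗ[k] M ⊗[k] H}
    (hc : IsComod coact)
    {coactE : Module.End k M →ₗ[k] Module.End k M ⊗[k] H}
    (hE : GYD.EndCoactChar k H Sinv coact coactE) (u : Module.End k M) (m : M) :
    coact (u m) = io k M H (coactE u) (coact m) := by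
  rw [io_coactE hS hE, ← opR_one coact m, ← Module.End.mul_apply, mul_assoc, opRi_opR hS hc,
    mul_one, Module.End.mul_apply, eU_tmul, opR_one]

theorem io_mul {A : Type} [Ring A] [Algebra k A] (v : Module.End k M) (x : A)
    (W : Module.End k M ⊗[k] A) :
    io k M A (TensorProduct.map (LinearMap.mulLeft k v) (LinearMap.mulRight k x) W)
      = io k M A (v ⊗ₜ x) * io k M A W := by
  induction W with
  | zero => simp
  | add x y hx hy => simp only [map_add, hx, hy, mul_add]
  | tmul u a =>
    simp only [TensorProduct.map_tmul, LinearMap.mulLeft_apply, LinearMap.mulRight_apply,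
      io_tmul, eU_mul, eJ_mul]
    simp only [mul_assoc]
    congr 1
    rw [← mul_assoc, ← mul_assoc, eU_eJ]

theorem coactE_counit (hS : GYD.IsAntipodeInv k H Sinv) {coact : M →ₗ[k] M ⊗[k] H}
    (hc : IsComod coact)
    {coactE : Module.End k M →ₗ[k] Module.End k M ⊗[k] H}
    (hE : GYD.EndCoactChar k H Sinv coact coactE) (u : Module.End k M) :
    TensorProduct.rid k _ (LinearMap.lTensor _ (counit (R := k)) (coactE u)) = u := by
  apply LinearMap.ext
  intro m
  have e1 : ∀ (w : Module.End k M ⊗[k] H) (t : M ⊗[k] H),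
      TensorProduct.rid k _ (LinearMap.lTensor _ (counit (R := k)) w)
        (TensorProduct.rid k M (LinearMap.lTensor M (counit (R := k)) t))
      = TensorProduct.rid k M (LinearMap.lTensor M (counit (R := k)) (io k M H w t)) := by
    intro w t
    induction w with
    | zero => simp
    | add x y hx hy => simp only [map_add, hx, hy, LinearMap.add_apply]
    | tmul u a =>
      induction t with
      | zero => simp
      | add x y hx hy => simp only [map_add, hx, hy]
      | tmul m x => simp [io_tmul_tmul, smul_smul, mul_comm]
  have := e1 (coactE u) (coact m)
  rw [hc.2, ← coact_apply hS hc hE, hc.2] at this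
  exact this

variable [FiniteDimensional k M]

theorem coactE_mul (hS : GYD.IsAntipodeInv k H Sinv) {coact : M →ₗ[k] M ⊗[k] H}
    (hc : IsComod coact)
    {coactE : Module.End k M →ₗ[k] Module.End k M ⊗[k] H}
    (hE : GYD.EndCoactChar k H Sinv coact coactE) (v w : Module.End k M)
    (t : Finset ℕ) (v₀ : ℕ → Module.End k M) (v₁ : ℕ → H)
    (hv : coactE v = ∑ j ∈ t, v₀ j ⊗ₜ[k] v₁ j) :
    coactE (v * w) = ∑ j ∈ t,
      TensorProduct.map (LinearMap.mulLeft k (v₀ j)) (LinearMap.mulRight k (v₁ j)) (coactE w) := by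
  apply io_inj
  simp only [map_sum, io_mul]
  rw [← Finset.sum_mul, ← map_sum, ← hv, io_coactE hS hE, io_coactE hS hE, io_coactE hS hE,
    eU_mul]
  have := opRi_opR hS hc
  simp only [mul_assoc]
  rw [← mul_assoc (opRi hS coact) (opR coact), this, one_mul]

theorem coactE_one (hS : GYD.IsAntipodeInv k H Sinv) {coact : M →ₗ[k] M ⊗[k] H}
    (hc : IsComod coact)
    {coactE : Module.End k M →ₗ[k] Module.End k M ⊗[k] H}
    (hE : GYD.EndCoactChar k H Sinv coact coactE) : coactE 1 = 1 ⊗ₜ 1 := by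
  apply io_inj
  rw [io_coactE hS hE, io_tmul, eU_one, eJ_one, mul_one, mul_one, opR_opRi hS hc]

theorem coactE_coassoc (hS : GYD.IsAntipodeInv k H Sinv) {coact : M →ₗ[k] M ⊗[k] H}
    (hc : IsComod coact)
    {coactE : Module.End k M →ₗ[k] Module.End k M ⊗[k] H}
    (hE : GYD.EndCoactChar k H Sinv coact coactE) (u : Module.End k M) :
    TensorProduct.assoc k _ H H (LinearMap.rTensor H coactE (coactE u))
      = LinearMap.lTensor _ (comul (R := k)) (coactE u) := by
  apply io_inj
  have hinv : eP coact (rm k (H ⊗[k] H) ∘ₗ comul (R := k)) *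
      eP coact ((rm k (H ⊗[k] H) ∘ₗ comul (R := k)) ∘ₗ SinvL Sinv hS) = 1 := by
    refine eP_inv hc _ _ (conv_Sinv_right hS _ ?_ ?_)
    · ext x; simp [rm_apply]
    · intro x y
      apply LinearMap.ext
      intro z
      simp [rm_apply, mul_assoc]
  have hco : ∀ m, LinearMap.lTensor M (comul (R := k)) (coact m) =
      TensorProduct.assoc k M H H (LinearMap.rTensor H coact (coact m)) := by
    intro m
    rw [hc.1]; simp
  suffices h : io k M (H ⊗[k] H)
      (TensorProduct.assoc k _ H H (LinearMap.rTensor H coactE (coactE u))) *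
        eP coact (rm k (H ⊗[k] H) ∘ₗ comul (R := k))
      = io k M (H ⊗[k] H) (LinearMap.lTensor _ (comul (R := k)) (coactE u)) *
        eP coact (rm k (H ⊗[k] H) ∘ₗ comul (R := k)) by
    have h2 := congrArg (fun z => z *
      eP coact ((rm k (H ⊗[k] H) ∘ₗ comul (R := k)) ∘ₗ SinvL Sinv hS)) h
    simpa only [mul_assoc, hinv, mul_one] using h2
  apply TensorProduct.ext'
  intro m y
  have e1 : eP coact (rm k (H ⊗[k] H) ∘ₗ comul (R := k)) (m ⊗ₜ y) =
      LinearMap.lTensor M (LinearMap.mulLeft k y)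
        (LinearMap.lTensor M (comul (R := k)) (coact m)) := by
    rw [eP_tmul, ← LinearMap.lTensor_comp_apply]
    rfl
  rw [Module.End.mul_apply, Module.End.mul_apply, e1, io_left, io_left]
  congr 1
  have e2 : ∀ (w : Module.End k M ⊗[k] H) (t : M ⊗[k] H),
      io k M (H ⊗[k] H) (LinearMap.lTensor _ (comul (R := k)) w)
        (LinearMap.lTensor M (comul (R := k)) t)
      = LinearMap.lTensor M (comul (R := k)) (io k M H w t) := by
    intro w t
    induction w with
    | zero => simp
    | add x y hx hy => simp only [map_add, hx, hy, LinearMap.add_apply]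
    | tmul u a =>
      induction t with
      | zero => simp
      | add x y hx hy => simp only [map_add, hx, hy]
      | tmul m x => simp [io_tmul_tmul]
  have e3 : ∀ (w : Module.End k M ⊗[k] H) (t : M ⊗[k] H),
      io k M (H ⊗[k] H) (TensorProduct.assoc k _ H H (LinearMap.rTensor H coactE w))
        (TensorProduct.assoc k M H H (LinearMap.rTensor H coact t))
      = TensorProduct.assoc k M H H (LinearMap.rTensor H coact (io k M H w t)) := by
    intro w t
    induction w with
    | zero => simp
    | add x y hx hy => simp only [map_add, hx, hy, LinearMap.add_apply]
    | tmul u a =>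
      induction t with
      | zero => simp
      | add x y hx hy => simp only [map_add, hx, hy]
      | tmul m x =>
        simp only [LinearMap.rTensor_tmul, io_tmul_tmul]
        rw [coact_apply hS hc hE]
        generalize coactE u = w
        generalize coact m = t
        induction w with
        | zero => simp
        | add x y hx hy =>
          simp only [map_add, hx, hy, LinearMap.add_apply, TensorProduct.add_tmul]
        | tmul u b =>
          induction t with
          | zero => simp
          | add x y hx hy => simp only [map_add, hx, hy, TensorProduct.add_tmul]
          | tmul m z => simp [io_tmul_tmul]
  rw [e2, ← coact_apply hS hc hE, hco, hco, e3, ← coact_apply hS hc hE]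

end Main

section Core

variable {k H M : Type} [Field k] [Ring H] [HopfAlgebra k H] [AddCommGroup M] [Module k M]

/-- the standing hypotheses -/
structure Ctx (Sinv : H → H) (α β : H ≃ₗ[k] H)
    (actM : H →ₗ[k] M →ₗ[k] M) (coactM : M →ₗ[k] M ⊗[k] H)
    (actE : H →ₗ[k] Module.End k M →ₗ[k] Module.End k M)
    (coactE : Module.End k M →ₗ[k] Module.End k M ⊗[k] H) : Prop where
  hS : GYD.IsAntipodeInv k H Sinv
  hα : GYD.IsHopfAut k H α
  hβ : GYD.IsHopfAut k H β
  hM : GYD.IsYD k H Sinv ⇑α ⇑β actM coactM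
  hactE : GYD.EndActChar k H ⇑α.symm actM actE
  hcoactE : GYD.EndCoactChar k H Sinv coactM coactE

variable {Sinv : H → H} {α β : H ≃ₗ[k] H}
    {actM : H →ₗ[k] M →ₗ[k] M} {coactM : M →ₗ[k] M ⊗[k] H}
    {actE : H →ₗ[k] Module.End k M →ₗ[k] Module.End k M}
    {coactE : Module.End k M →ₗ[k] Module.End k M ⊗[k] H}

/-- the algebra map `h ↦ (m ↦ α⁻¹(h) · m)` -/
def fa (α : H ≃ₗ[k] H) (actM : H →ₗ[k] M →ₗ[k] M) : H →ₗ[k] Module.End k M :=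
  actM ∘ₗ α.symm.toLinearMap

theorem fa_apply (h : H) (m : M) : fa α actM h m = actM (α.symm h) m := rfl

theorem Ctx.comod (C : Ctx Sinv α β actM coactM actE coactE) : IsComod coactM :=
  ⟨C.hM.2.2.1, C.hM.2.2.2.1⟩

theorem Ctx.fa_one (C : Ctx Sinv α β actM coactM actE coactE) : fa α actM 1 = 1 := by
  ext m
  rw [fa_apply, (hopfAut_symm C.hα).2.1, C.hM.1]; rfl

theorem Ctx.fa_mul (C : Ctx Sinv α β actM coactM actE coactE) (x y : H) :
    fa α actM (x * y) = fa α actM x * fa α actM y := by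
  ext m
  rw [fa_apply, (hopfAut_symm C.hα).1, C.hM.2.1]; rfl

theorem Ctx.actE_rep (C : Ctx Sinv α β actM coactM actE coactE) (h : H) (u : Module.End k M)
    (s : Finset ℕ) (p q : ℕ → H) (hh : comul (R := k) h = ∑ i ∈ s, p i ⊗ₜ[k] q i) :
    actE h u = ∑ i ∈ s, fa α actM (p i) * u * fa α actM (HopfAlgebra.antipode k (q i)) := by
  ext m
  rw [C.hactE h u m s p q hh]
  simp [fa_apply]

/-- `Σ (h₁·u) f(h₂) = f(h) u` -/
theorem Ctx.actE_fa (C : Ctx Sinv α β actM coactM actE coactE) (h : H) (u : Module.End k M)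
    (s : Finset ℕ) (p q : ℕ → H) (hh : comul (R := k) h = ∑ i ∈ s, p i ⊗ₜ[k] q i) :
    ∑ i ∈ s, actE (p i) u * fa α actM (q i) = fa α actM h * u := by
  let F : WithConv (H →ₗ[k] Module.End k M) := toConv (fa α actM)
  let FS : WithConv (H →ₗ[k] Module.End k M) := toConv (fa α actM ∘ₗ HopfAlgebra.antipode k)
  have hF : FS * F = 1 := conv_antipode_left _ C.fa_one C.fa_mul
  have hact : F * cst u * FS = toConv (actE.flip u) := by
    refine conv_ext fun h => ?_
    obtain ⟨s, p, q, hh⟩ := exists_rep (comul (R := k) h)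
    rw [conv_rep _ _ h s p q hh]
    simp only [mul_cst_apply]
    exact (C.actE_rep h u s p q hh).symm
  have h2 : toConv (actE.flip u) * F = F * cst u := by
    rw [← hact, mul_assoc, hF, mul_one]
  have := conv_rep (toConv (actE.flip u)) F h s p q hh
  rw [h2, mul_cst_apply] at this
  exact this.symm

theorem Ctx.yd (C : Ctx Sinv α β actM coactM actE coactE) :
    (cst (opR coactM) * toConv (eU k M H ∘ₗ fa α actM) : WithConv (H →ₗ[k] _))
      = toConv (eJ k M H ∘ₗ SinvL Sinv C.hS) * toConv (eU k M H ∘ₗ fa α actM) *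
        (cst (opR coactM) * toConv (eJ k M H ∘ₗ β.toLinearMap ∘ₗ α.symm.toLinearMap)) := by
  refine conv_ext fun h => ?_
  obtain ⟨s, a, b, c, hh⟩ := exists_rep3 (LinearMap.rTensor H (comul (R := k)) (comul (R := k) h))
  rw [conv_rep3 _ _ _ h s a b c hh]
  simp only [cst_mul_apply]
  have hh' : LinearMap.rTensor H (comul (R := k)) (comul (R := k) (α.symm h))
      = ∑ i ∈ s, (α.symm (a i) ⊗ₜ[k] α.symm (b i)) ⊗ₜ[k] α.symm (c i) := by
    have e : ∀ t : H ⊗[k] H, LinearMap.rTensor H (comul (R := k))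
        (TensorProduct.map α.symm.toLinearMap α.symm.toLinearMap t)
        = TensorProduct.map (TensorProduct.map α.symm.toLinearMap α.symm.toLinearMap)
          α.symm.toLinearMap (LinearMap.rTensor H (comul (R := k)) t) := by
      intro t
      induction t with
      | zero => simp
      | add x y hx hy => simp only [map_add, hx, hy]
      | tmul x y => simp [(hopfAut_symm C.hα).2.2.1]
    rw [(hopfAut_symm C.hα).2.2.1, e, hh]
    simp
  apply TensorProduct.ext'
  intro m g
  obtain ⟨t, m₀, m₁, hm⟩ := exists_rep (coactM m)
  have key := C.hM.2.2.2.2 (α.symm h) m s t _ _ _ m₀ m₁ hh' hm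
  simp only [LinearMap.comp_apply, Module.End.mul_apply, eU_tmul, LinearMap.sum_apply, eJ_tmul,
    LinearEquiv.coe_coe, fa_apply, opR, eP_tmul, key, hm, map_sum, LinearMap.lTensor_tmul]
  refine Finset.sum_congr rfl fun j _ => Finset.sum_congr rfl fun l _ => ?_
  rw [hopfAut_Sinv C.hS C.hα]
  simp [rm_apply, SinvL, mul_assoc]

theorem Ctx.yd2 (C : Ctx Sinv α β actM coactM actE coactE) :
    (toConv (eJ k M H) * cst (opR coactM) * toConv (eU k M H ∘ₗ fa α actM) :
        WithConv (H →ₗ[k] _))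
      = toConv (eU k M H ∘ₗ fa α actM) * cst (opR coactM) *
        toConv (eJ k M H ∘ₗ β.toLinearMap ∘ₗ α.symm.toLinearMap) := by
  have := conv_Sinv_right C.hS (eJ k M H) eJ_one eJ_mul
  rw [mul_assoc, C.yd, ← mul_assoc, ← mul_assoc, ← mul_assoc, this, one_mul]

theorem ring_aux {W : Type} [Ring W] {j R Ri F FS jB U : W}
    (h1 : j * R * F = F * R * jB) (hl : FS * F = 1) (hr : F * FS = 1)
    (hcomm : jB * U = U * jB) (hR : R * Ri = 1) (hR' : Ri * R = 1) :
    j * (R * (F * U * FS) * Ri) = F * (R * U * Ri) * FS * j := by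
  have h2 : R * jB * FS = FS * j * R := by
    calc R * jB * FS = (FS * F) * R * jB * FS := by rw [hl, one_mul]
      _ = FS * (F * R * jB) * FS := by simp only [mul_assoc]
      _ = FS * j * R * (F * FS) := by rw [← h1]; simp only [mul_assoc]
      _ = FS * j * R := by rw [hr, mul_one]
  calc j * (R * (F * U * FS) * Ri) = (j * R * F) * U * FS * Ri := by simp only [mul_assoc]
    _ = F * R * (jB * U) * FS * Ri := by rw [h1]; simp only [mul_assoc]
    _ = F * R * U * ((Ri * R) * jB * FS) * Ri := by
      rw [hcomm, hR', one_mul]; simp only [mul_assoc]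
    _ = F * R * U * Ri * (R * jB * FS) * Ri := by simp only [mul_assoc]
    _ = F * R * U * Ri * FS * j * (R * Ri) := by rw [h2]; simp only [mul_assoc]
    _ = F * (R * U * Ri) * FS * j := by rw [hR, mul_one]; simp only [mul_assoc]

theorem conv_eJ_comm (φ : H →ₗ[k] H) (u : Module.End k M) :
    (toConv (eJ k M H ∘ₗ φ) * cst (eU k M H u) : WithConv (H →ₗ[k] Module.End k (M ⊗[k] H)))
      = cst (eU k M H u) * toConv (eJ k M H ∘ₗ φ) := by
  refine conv_ext fun h => ?_
  rw [mul_cst_apply, cst_mul_apply]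
  change eJ k M H (φ h) * eU k M H u = eU k M H u * eJ k M H (φ h)
  exact (eU_eJ u (φ h)).symm

theorem conv_eU_comm (φ : H →ₗ[k] Module.End k M) (x : H) :
    (cst (eJ k M H x) * toConv (eU k M H ∘ₗ φ) : WithConv (H →ₗ[k] Module.End k (M ⊗[k] H)))
      = toConv (eU k M H ∘ₗ φ) * cst (eJ k M H x) := by
  refine conv_ext fun h => ?_
  rw [mul_cst_apply, cst_mul_apply]
  change eJ k M H x * eU k M H (φ h) = eU k M H (φ h) * eJ k M H x
  exact (eU_eJ (φ h) x).symm

theorem Ctx.F4conv (C : Ctx Sinv α β actM coactM actE coactE) (u : Module.End k M) :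
    (toConv (eJ k M H) * (cst (opR coactM) * (toConv (eU k M H ∘ₗ fa α actM) *
        cst (eU k M H u) * toConv ((eU k M H ∘ₗ fa α actM) ∘ₗ HopfAlgebra.antipode k)) *
          cst (opRi C.hS coactM)) : WithConv (H →ₗ[k] _))
    = toConv (eU k M H ∘ₗ fa α actM) *
        (cst (opR coactM) * cst (eU k M H u) * cst (opRi C.hS coactM)) *
        toConv ((eU k M H ∘ₗ fa α actM) ∘ₗ HopfAlgebra.antipode k) * toConv (eJ k M H) := by
  have h1 := C.yd2
  have hu1 : (eU k M H ∘ₗ fa α actM) 1 = 1 := by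
    rw [LinearMap.comp_apply, C.fa_one, eU_one]
  have hum : ∀ x y, (eU k M H ∘ₗ fa α actM) (x * y)
      = (eU k M H ∘ₗ fa α actM) x * (eU k M H ∘ₗ fa α actM) y := by
    intro x y
    simp only [LinearMap.comp_apply, C.fa_mul, eU_mul]
  have hl := conv_antipode_left _ hu1 hum
  have hr := conv_antipode_right _ hu1 hum
  have hcomm : (toConv (eJ k M H ∘ₗ β.toLinearMap ∘ₗ α.symm.toLinearMap) * cst (eU k M H u) :
      WithConv (H →ₗ[k] _)) = cst (eU k M H u) *
        toConv (eJ k M H ∘ₗ β.toLinearMap ∘ₗ α.symm.toLinearMap) := 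
    conv_eJ_comm _ u
  have hR : (cst (opR coactM) * cst (opRi C.hS coactM) : WithConv (H →ₗ[k] _)) = 1 := by
    rw [cst_mul_cst, opR_opRi C.hS C.comod, cst_one]
  have hR' : (cst (opRi C.hS coactM) * cst (opR coactM) : WithConv (H →ₗ[k] _)) = 1 := by
    rw [cst_mul_cst, opRi_opR C.hS C.comod, cst_one]
  exact ring_aux h1 hl hr hcomm hR hR'

theorem Ctx.conv_act (C : Ctx Sinv α β actM coactM actE coactE) (u : Module.End k M) :
    toConv (eU k M H ∘ₗ fa α actM) * cst (eU k M H u) *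
      toConv ((eU k M H ∘ₗ fa α actM) ∘ₗ HopfAlgebra.antipode k)
    = toConv (eU k M H ∘ₗ actE.flip u) := by
  refine conv_ext fun h => ?_
  obtain ⟨s, p, q, hh⟩ := exists_rep (comul (R := k) h)
  rw [conv_rep _ _ h s p q hh]
  simp only [mul_cst_apply, LinearMap.comp_apply, LinearMap.flip_apply]
  rw [C.actE_rep h u s p q hh]
  simp only [map_sum, eU_mul]

/-- `u ⊗ h ↦ u f(h)` -/
def Ph (f : H →ₗ[k] Module.End k M) : Module.End k M ⊗[k] H →ₗ[k] Module.End k M :=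
  TensorProduct.lift ((LinearMap.mul k (Module.End k M)).compl₁₂ LinearMap.id f)

theorem Ph_tmul (f : H →ₗ[k] Module.End k M) (u : Module.End k M) (h : H) :
    Ph f (u ⊗ₜ h) = u * f h := rfl

theorem Ctx.Ph_map (C : Ctx Sinv α β actM coactM actE coactE) (v : Module.End k M) (x : H)
    (W : Module.End k M ⊗[k] H) :
    Ph (fa α actM) (TensorProduct.map (LinearMap.mulLeft k v) (LinearMap.mulRight k x) W)
      = v * Ph (fa α actM) W * fa α actM x := by
  induction W with
  | zero => simp
  | add x y hx hy => simp only [map_add, hx, hy, mul_add, add_mul]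
  | tmul u a => simp [Ph_tmul, C.fa_mul, mul_assoc]

variable [FiniteDimensional k M]

theorem Ctx.F4 (C : Ctx Sinv α β actM coactM actE coactE) (u : Module.End k M) (h : H)
    (s : Finset ℕ) (p q : ℕ → H) (hh : comul (R := k) h = ∑ i ∈ s, p i ⊗ₜ[k] q i)
    (t : Finset ℕ) (u₀ : ℕ → Module.End k M) (u₁ : ℕ → H)
    (hu : coactE u = ∑ j ∈ t, u₀ j ⊗ₜ[k] u₁ j) :
    ∑ i ∈ s, TensorProduct.map (LinearMap.mulLeft k 1) (LinearMap.mulRight k (p i))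
      (coactE (actE (q i) u)) = ∑ j ∈ t, ∑ i ∈ s, actE (p i) (u₀ j) ⊗ₜ (q i * u₁ j) := by
  apply io_inj
  have key := congrArg (fun F : WithConv (H →ₗ[k] Module.End k (M ⊗[k] H)) => F.ofConv h)
    (C.F4conv u)
  rw [conv_rep _ _ h s p q hh] at key
  simp only [mul_cst_apply, cst_mul_apply, C.conv_act, LinearMap.comp_apply,
    LinearMap.flip_apply] at key
  simp only [← io_coactE C.hS C.hcoactE, cst_mul_cst] at key
  simp only [map_sum, io_mul, io_tmul, eU_one, one_mul]
  refine key.trans ?_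
  have e : (cst (io k M H (coactE u)) : WithConv (H →ₗ[k] _))
      = ∑ j ∈ t, cst (eU k M H (u₀ j)) * cst (eJ k M H (u₁ j)) := by
    refine conv_ext fun h => ?_
    simp only [cst_mul_cst, hu, map_sum, io_tmul]
    simp [cst, Finset.smul_sum, WithConv.ofConv_sum, LinearMap.sum_apply]
  have e2 : ∀ x : H, (cst (eJ k M H x) *
      toConv ((eU k M H ∘ₗ fa α actM) ∘ₗ HopfAlgebra.antipode k) : WithConv (H →ₗ[k] _))
      = toConv ((eU k M H ∘ₗ fa α actM) ∘ₗ HopfAlgebra.antipode k) * cst (eJ k M H x) := 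
    conv_eU_comm (fa α actM ∘ₗ HopfAlgebra.antipode k)
  rw [e, Finset.mul_sum, Finset.sum_mul, Finset.sum_mul, WithConv.ofConv_sum,
    LinearMap.sum_apply]
  refine Finset.sum_congr rfl fun j _ => ?_
  rw [← mul_assoc, mul_assoc (_ * _) (cst _) _, e2, ← mul_assoc, C.conv_act, mul_assoc,
    conv_rep _ _ h s p q hh]
  simp only [cst_mul_apply, LinearMap.comp_apply, LinearMap.flip_apply, eJ_mul]

theorem Ctx.T1 (C : Ctx Sinv α β actM coactM actE coactE) (v w : Module.End k M)
    (t : Finset ℕ) (v₀ : ℕ → Module.End k M) (v₁ : ℕ → H)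
    (hv : coactE v = ∑ j ∈ t, v₀ j ⊗ₜ[k] v₁ j) :
    Ph (fa α actM) (coactE (v * w)) = ∑ j ∈ t, v₀ j * Ph (fa α actM) (coactE w) *
      fa α actM (v₁ j) := by
  rw [coactE_mul C.hS C.comod C.hcoactE v w t v₀ v₁ hv, map_sum]
  simp only [C.Ph_map]

theorem Ctx.T2 (C : Ctx Sinv α β actM coactM actE coactE) (u : Module.End k M) (h : H)
    (s : Finset ℕ) (p q : ℕ → H) (hh : comul (R := k) h = ∑ i ∈ s, p i ⊗ₜ[k] q i) :
    ∑ i ∈ s, Ph (fa α actM) (coactE (actE (q i) u)) * fa α actM (p i)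
      = fa α actM h * Ph (fa α actM) (coactE u) := by
  obtain ⟨t, u₀, u₁, hu⟩ := exists_rep (coactE u)
  have := congrArg (Ph (fa α actM)) (C.F4 u h s p q hh t u₀ u₁ hu)
  simp only [map_sum, C.Ph_map, Ph_tmul, one_mul] at this
  rw [this, hu]
  simp only [map_sum, Ph_tmul, Finset.mul_sum]
  refine Finset.sum_congr rfl fun j _ => ?_
  simp only [C.fa_mul, ← mul_assoc]
  rw [← Finset.sum_mul, C.actE_fa h _ s p q hh]

end Core

section Final

variable {k H M : Type} [Field k] [Ring H] [HopfAlgebra k H] [AddCommGroup M] [Module k M]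
variable {Sinv : H → H} {α β : H ≃ₗ[k] H}
    {actM : H →ₗ[k] M →ₗ[k] M} {coactM : M →ₗ[k] M ⊗[k] H}
    {actE : H →ₗ[k] Module.End k M →ₗ[k] Module.End k M}
    {coactE : Module.End k M →ₗ[k] Module.End k M ⊗[k] H}

/-- `a ⊗ y ↦ e(a) K(y)` -/
def PhG {E Y B : Type} [AddCommGroup E] [Module k E] [AddCommGroup Y] [Module k Y] [Ring B]
    [Algebra k B] (e : E →ₗ[k] B) (K : Y →ₗ[k] B) : E ⊗[k] Y →ₗ[k] B :=
  TensorProduct.lift ((LinearMap.mul k B).compl₁₂ e K)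

theorem PhG_tmul {E Y B : Type} [AddCommGroup E] [Module k E] [AddCommGroup Y] [Module k Y]
    [Ring B] [Algebra k B] (e : E →ₗ[k] B) (K : Y →ₗ[k] B) (a : E) (y : Y) :
    PhG e K (a ⊗ₜ y) = e a * K y := rfl

/-- `τ` without the `op` -/
def tt (α : H ≃ₗ[k] H) (actM : H →ₗ[k] M →ₗ[k] M)
    (coactE : Module.End k M →ₗ[k] Module.End k M ⊗[k] H) :
    Module.End k M →ₗ[k] Module.End k M := Ph (fa α actM) ∘ₗ coactE

theorem tt_apply (u : Module.End k M) : tt α actM coactE u = Ph (fa α actM) (coactE u) := rfl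

theorem tt_rep (u : Module.End k M) (t : Finset ℕ) (u₀ : ℕ → Module.End k M) (u₁ : ℕ → H)
    (hu : coactE u = ∑ j ∈ t, u₀ j ⊗ₜ[k] u₁ j) :
    tt α actM coactE u = ∑ j ∈ t, u₀ j * fa α actM (u₁ j) := by
  rw [tt_apply, hu, map_sum]; rfl

/-- `u ⊗ h ↦ (m ⊗ g ↦ u m ⊗ h g)` -/
def il (k M H : Type) [Field k] [Ring H] [Algebra k H] [AddCommGroup M] [Module k M] :
    Module.End k M ⊗[k] H →ₗ[k] Module.End k (M ⊗[k] H) :=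
  PhG (eU k M H) (LinearMap.lTensorHom M ∘ₗ LinearMap.mul k H)

theorem il_tmul_tmul (u : Module.End k M) (h : H) (m : M) (g : H) :
    il k M H (u ⊗ₜ h) (m ⊗ₜ g) = u m ⊗ₜ (h * g) := rfl

theorem il_eval (W : Module.End k M ⊗[k] H) (m : M) :
    il k M H W (m ⊗ₜ 1) = LinearMap.rTensor H (LinearMap.applyₗ (R := k) m) W := by
  induction W with
  | zero => simp
  | add x y hx hy => simp only [map_add, hx, hy, LinearMap.add_apply]
  | tmul u a => simp [il_tmul_tmul]

/-- the operator `m ⊗ g ↦ m₀ ⊗ γ(m₁) g` -/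
def opL (γ : H ≃ₗ[k] H) (coact : M →ₗ[k] M ⊗[k] H) : Module.End k (M ⊗[k] H) :=
  eP coact (LinearMap.mul k H ∘ₗ γ.toLinearMap)

/-- the operator `m ⊗ g ↦ m₀ ⊗ γ(S(m₁)) g` -/
def opLi (γ : H ≃ₗ[k] H) (coact : M →ₗ[k] M ⊗[k] H) : Module.End k (M ⊗[k] H) :=
  eP coact ((LinearMap.mul k H ∘ₗ γ.toLinearMap) ∘ₗ HopfAlgebra.antipode k)

theorem opL_opLi {γ : H ≃ₗ[k] H} (hγ : GYD.IsHopfAut k H γ) {coact : M →ₗ[k] M ⊗[k] H}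
    (hc : IsComod coact) : opL γ coact * opLi γ coact = 1 := by
  refine eP_inv hc _ _ (conv_antipode_right (LinearMap.mul k H ∘ₗ γ.toLinearMap) ?_ ?_)
  · ext x; simp [hγ.2.1]
  · intro x y; ext z; simp [hγ.1, mul_assoc]

theorem coactO_eval {γ : H ≃ₗ[k] H} (hγ : GYD.IsHopfAut k H γ)
    {coactO : (Module.End k M)ᵐᵒᵖ →ₗ[k] (Module.End k M)ᵐᵒᵖ ⊗[k] H}
    (hcoactO : GYD.EndOpCoactChar k H
      ((LinearMap.lTensor M γ.toLinearMap) ∘ₗ coactM) coactO)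
    (v : (Module.End k M)ᵐᵒᵖ) (m : M) :
    LinearMap.rTensor H ((LinearMap.applyₗ (R := k) m).comp
        (MulOpposite.opLinearEquiv k).symm.toLinearMap) (coactO v)
      = opL γ coactM (eU k M H v.unop (opLi γ coactM (m ⊗ₜ 1))) := by
  obtain ⟨t, m₀, m₁, hm⟩ := exists_rep (coactM m)
  choose r n₀ n₁ hn using fun j => exists_rep (coactM (v.unop (m₀ j)))
  rw [hcoactO v m t m₀ (fun j => γ (m₁ j)) r n₀ (fun j l => γ (n₁ j l)) (by simp [hm])
    (by intro j _; simp [hn])]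
  rw [opLi, eP_tmul, hm]
  simp only [map_sum, LinearMap.lTensor_tmul, eU_tmul, opL, eP_tmul, hn]
  refine Finset.sum_congr rfl fun j _ => Finset.sum_congr rfl fun l _ => ?_
  simp [hopfAut_antipode hγ]

variable [FiniteDimensional k M]

theorem Ctx.coassoc (C : Ctx Sinv α β actM coactM actE coactE) (u : Module.End k M)
    (t : Finset ℕ) (u₀ : ℕ → Module.End k M) (u₁ : ℕ → H)
    (hu : coactE u = ∑ j ∈ t, u₀ j ⊗ₜ[k] u₁ j)
    {X : Type} [AddCommGroup X] [Module k X]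
    (L : Module.End k M ⊗[k] (H ⊗[k] H) →ₗ[k] X) :
    ∑ j ∈ t, L (TensorProduct.assoc k _ H H (coactE (u₀ j) ⊗ₜ u₁ j))
      = ∑ j ∈ t, L (u₀ j ⊗ₜ comul (R := k) (u₁ j)) := by
  have := congrArg L (coactE_coassoc C.hS C.comod C.hcoactE u)
  rw [hu] at this
  simpa only [map_sum, LinearMap.rTensor_tmul, LinearMap.lTensor_tmul] using this

theorem Ctx.tt_mul (C : Ctx Sinv α β actM coactM actE coactE) (u v : Module.End k M)
    (t : Finset ℕ) (v₀ : ℕ → Module.End k M) (v₁ : ℕ → H)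
    (hv : coactE v = ∑ j ∈ t, v₀ j ⊗ₜ[k] v₁ j) :
    ∑ j ∈ t, tt α actM coactE (v₀ j * actE (v₁ j) u)
      = tt α actM coactE v * tt α actM coactE u := by
  let K : H ⊗[k] H →ₗ[k] Module.End k M := TensorProduct.lift
    ((LinearMap.mul k (Module.End k M)).flip.compl₁₂ (fa α actM)
      (tt α actM coactE ∘ₗ actE.flip u))
  have hK : ∀ g h, K (g ⊗ₜ h) = tt α actM coactE (actE h u) * fa α actM g := fun g h => rfl
  have key := C.coassoc v t v₀ v₁ hv (PhG LinearMap.id K)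
  have e1 : ∀ j, PhG LinearMap.id K (TensorProduct.assoc k _ H H (coactE (v₀ j) ⊗ₜ v₁ j))
      = tt α actM coactE (v₀ j * actE (v₁ j) u) := by
    intro j
    obtain ⟨s, a, b, hab⟩ := exists_rep (coactE (v₀ j))
    rw [tt_apply, C.T1 _ _ s a b hab, hab, TensorProduct.sum_tmul, map_sum, map_sum]
    refine Finset.sum_congr rfl fun i _ => ?_
    rw [TensorProduct.assoc_tmul, PhG_tmul, hK, ← mul_assoc]
    rfl
  have e2 : ∀ j, PhG LinearMap.id K (v₀ j ⊗ₜ comul (R := k) (v₁ j))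
      = v₀ j * fa α actM (v₁ j) * tt α actM coactE u := by
    intro j
    obtain ⟨s, p, q, hh⟩ := exists_rep (comul (R := k) (v₁ j))
    rw [PhG_tmul, mul_assoc, tt_apply, ← C.T2 u _ s p q hh, hh, map_sum]
    rfl
  simp only [e1, e2] at key
  rw [key, ← Finset.sum_mul, tt_rep v t v₀ v₁ hv]

theorem Ctx.tt_one (C : Ctx Sinv α β actM coactM actE coactE) : tt α actM coactE 1 = 1 := by
  rw [tt_apply, coactE_one C.hS C.comod C.hcoactE, Ph_tmul, C.fa_one, mul_one]

theorem Ctx.tt_act (C : Ctx Sinv α β actM coactM actE coactE) (u : Module.End k M) (h : H)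
    (s : Finset ℕ) (p q : ℕ → H) (hh : comul (R := k) h = ∑ i ∈ s, p i ⊗ₜ[k] q i) :
    tt α actM coactE (actE h u)
      = ∑ i ∈ s, fa α actM (q i) * tt α actM coactE u * fa α actM (Sinv (p i)) := by
  let o : Module.End k M →ₗ[k] (Module.End k M)ᵐᵒᵖ := (MulOpposite.opLinearEquiv k).toLinearMap
  let Fo : H →ₗ[k] (Module.End k M)ᵐᵒᵖ := o ∘ₗ fa α actM
  let G : WithConv (H →ₗ[k] (Module.End k M)ᵐᵒᵖ) :=
    toConv (o ∘ₗ tt α actM coactE ∘ₗ actE.flip u)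
  have h1 : toConv (Fo ∘ₗ SinvL Sinv C.hS) * toConv Fo = 1 := by
    refine conv_Sinv_left C.hS Fo ?_ ?_
    · change MulOpposite.op (fa α actM 1) = 1
      rw [C.fa_one]; rfl
    · intro x y
      change MulOpposite.op (fa α actM (x * y)) = _
      rw [C.fa_mul]; rfl
  have h2 : toConv Fo * G = cst (o (tt α actM coactE u)) * toConv Fo := by
    refine conv_ext fun h => ?_
    obtain ⟨s, p, q, hh⟩ := exists_rep (comul (R := k) h)
    rw [conv_rep _ _ h s p q hh, cst_mul_apply]
    have := congrArg o (C.T2 u h s p q hh)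
    rw [map_sum] at this
    exact this
  have h3 : G = toConv (Fo ∘ₗ SinvL Sinv C.hS) * (cst (o (tt α actM coactE u)) * toConv Fo) := by
    rw [← h2, ← mul_assoc, h1, one_mul]
  have h4 := congrArg (fun F : WithConv (H →ₗ[k] (Module.End k M)ᵐᵒᵖ) => F.ofConv h) h3
  rw [conv_rep _ _ h s p q hh] at h4
  simp only [cst_mul_apply] at h4
  have h5 := congrArg (MulOpposite.opLinearEquiv k).symm h4
  rw [map_sum] at h5
  exact h5

theorem Ctx.tt_W (C : Ctx Sinv α β actM coactM actE coactE) (u : Module.End k M)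
    (t : Finset ℕ) (u₀ : ℕ → Module.End k M) (u₁ : ℕ → H)
    (hu : coactE u = ∑ j ∈ t, u₀ j ⊗ₜ[k] u₁ j)
    (s : ℕ → Finset ℕ) (p q : ℕ → ℕ → H)
    (hx : ∀ j, comul (R := k) (u₁ j) = ∑ i ∈ s j, p j i ⊗ₜ[k] q j i) :
    LinearMap.rTensor H (tt α actM coactE) (coactE u)
      = ∑ j ∈ t, ∑ i ∈ s j, (u₀ j * fa α actM (p j i)) ⊗ₜ[k] q j i := by
  have key := C.coassoc u t u₀ u₁ hu
    (LinearMap.rTensor H (Ph (fa α actM)) ∘ₗ (TensorProduct.assoc k _ H H).symm.toLinearMap)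
  simp only [LinearMap.comp_apply, LinearEquiv.coe_coe, LinearEquiv.symm_apply_apply, hx,
    TensorProduct.tmul_sum, map_sum, TensorProduct.assoc_symm_tmul, LinearMap.rTensor_tmul,
    Ph_tmul] at key
  rw [← key, hu]
  simp only [map_sum, LinearMap.rTensor_tmul]
  rfl

theorem Ctx.coact_tt (C : Ctx Sinv α β actM coactM actE coactE) (u : Module.End k M)
    (t : Finset ℕ) (u₀ : ℕ → Module.End k M) (u₁ : ℕ → H)
    (hu : coactE u = ∑ j ∈ t, u₀ j ⊗ₜ[k] u₁ j)
    (s : ℕ → Finset ℕ) (p q : ℕ → ℕ → H)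
    (hx : ∀ j, comul (R := k) (u₁ j) = ∑ i ∈ s j, p j i ⊗ₜ[k] q j i)
    (m : M) (r : Finset ℕ) (m₀ : ℕ → M) (m₁ : ℕ → H)
    (hm : coactM m = ∑ l ∈ r, m₀ l ⊗ₜ[k] m₁ l) :
    coactM (tt α actM coactE u m) = ∑ j ∈ t, ∑ i ∈ s j, ∑ l ∈ r,
      (u₀ j * fa α actM (p j i)) (m₀ l) ⊗ₜ[k] (β (α.symm (q j i)) * m₁ l) := by
  let K : H ⊗[k] H →ₗ[k] Module.End k (M ⊗[k] H) := PhG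
    (LinearMap.mulRight k (opR coactM) ∘ₗ eJ k M H) (eU k M H ∘ₗ fa α actM)
  have hK : ∀ j, K (comul (R := k) (u₁ j)) = ∑ i ∈ s j, eU k M H (fa α actM (p j i)) *
      opR coactM * eJ k M H (β (α.symm (q j i))) := by
    intro j
    have h4 := congrArg (fun F : WithConv (H →ₗ[k] Module.End k (M ⊗[k] H)) =>
      F.ofConv (u₁ j)) C.yd2
    rw [conv_rep _ _ _ (s j) (p j) (q j) (hx j), conv_rep _ _ _ (s j) (p j) (q j) (hx j)] at h4
    simp only [mul_cst_apply] at h4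
    rw [hx, map_sum]
    exact h4
  have key := C.coassoc u t u₀ u₁ hu (PhG (eU k M H) K)
  have e1 : ∀ j, (PhG (eU k M H) K (TensorProduct.assoc k _ H H (coactE (u₀ j) ⊗ₜ u₁ j)))
      (m ⊗ₜ 1) = coactM (u₀ j (fa α actM (u₁ j) m)) := by
    intro j
    obtain ⟨s, a, b, hab⟩ := exists_rep (coactE (u₀ j))
    rw [coact_apply C.hS C.comod C.hcoactE, hab, TensorProduct.sum_tmul, map_sum, map_sum,
      map_sum, LinearMap.sum_apply, LinearMap.sum_apply]
    refine Finset.sum_congr rfl fun i _ => ?_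
    rw [TensorProduct.assoc_tmul, PhG_tmul, ← opR_one coactM]
    rfl
  have key2 := congrArg (fun F : Module.End k (M ⊗[k] H) => F (m ⊗ₜ 1)) key
  simp only [LinearMap.sum_apply, e1, PhG_tmul, hK] at key2
  rw [tt_rep u t u₀ u₁ hu, LinearMap.sum_apply, map_sum]
  refine key2.trans ?_
  refine Finset.sum_congr rfl fun j _ => ?_
  rw [Finset.mul_sum, LinearMap.sum_apply]
  refine Finset.sum_congr rfl fun i _ => ?_
  simp only [Module.End.mul_apply, eJ_tmul, one_mul, opR, eP_tmul, hm, map_sum,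
    LinearMap.lTensor_tmul, eU_tmul, LinearMap.flip_apply, rm_apply]

theorem Ctx.opL_tt (C : Ctx Sinv α β actM coactM actE coactE) (u : Module.End k M) :
    opL (β.symm.trans α) coactM * eU k M H (tt α actM coactE u)
      = il k M H (LinearMap.rTensor H (tt α actM coactE) (coactE u)) *
        opL (β.symm.trans α) coactM := by
  apply TensorProduct.ext'
  intro m g
  obtain ⟨t, u₀, u₁, hu⟩ := exists_rep (coactE u)
  choose s p q hx using fun j => exists_rep (comul (R := k) (u₁ j))
  obtain ⟨r, m₀, m₁, hm⟩ := exists_rep (coactM m)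
  rw [C.tt_W u t u₀ u₁ hu s p q hx]
  rw [Module.End.mul_apply, Module.End.mul_apply, eU_tmul, opL, eP_tmul, eP_tmul,
    C.coact_tt u t u₀ u₁ hu s p q hx m r m₀ m₁ hm, hm]
  simp only [map_sum, LinearMap.sum_apply, LinearMap.lTensor_tmul, il_tmul_tmul,
    LinearMap.flip_apply, LinearMap.comp_apply, LinearMap.mul_apply', LinearEquiv.coe_coe]
  have hγ := (hopfAut_trans (hopfAut_symm C.hβ) C.hα).1
  simp only [hγ, mul_assoc]
  simp only [LinearEquiv.trans_apply, LinearEquiv.symm_apply_apply, LinearEquiv.apply_symm_apply]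
  conv_rhs => rw [Finset.sum_comm]
  refine Finset.sum_congr rfl fun j _ => ?_
  rw [Finset.sum_comm]

theorem Ctx.colin (C : Ctx Sinv α β actM coactM actE coactE)
    {coactO : (Module.End k M)ᵐᵒᵖ →ₗ[k] (Module.End k M)ᵐᵒᵖ ⊗[k] H}
    (hcoactO : GYD.EndOpCoactChar k H
      ((LinearMap.lTensor M (β.symm.trans α).toLinearMap) ∘ₗ coactM) coactO)
    (τ : Module.End k M →ₗ[k] (Module.End k M)ᵐᵒᵖ)
    (hτ : ∀ u, (τ u).unop = tt α actM coactE u) (u : Module.End k M) :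
    coactO (τ u) = LinearMap.rTensor H τ (coactE u) := by
  have hγ := hopfAut_trans (hopfAut_symm C.hβ) C.hα
  apply (LinearEquiv.rTensor H
    (MulOpposite.opLinearEquiv k (M := Module.End k M)).symm).injective
  have e : tt α actM coactE
      = (MulOpposite.opLinearEquiv k (M := Module.End k M)).symm.toLinearMap ∘ₗ τ := by
    ext1 u; exact (hτ u).symm
  have e' : ∀ W, LinearEquiv.rTensor H (MulOpposite.opLinearEquiv k (M := Module.End k M)).symm W
      = LinearMap.rTensor H
        (MulOpposite.opLinearEquiv k (M := Module.End k M)).symm.toLinearMap W := fun _ => rfl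
  rw [e', e', ← LinearMap.rTensor_comp_apply, ← e]
  apply eval_inj
  intro m
  have h1 := coactO_eval hγ hcoactO (τ u) m
  rw [hτ, ← Module.End.mul_apply, ← Module.End.mul_apply, C.opL_tt, mul_assoc,
    opL_opLi hγ C.comod, mul_one, il_eval] at h1
  rw [← h1, LinearMap.rTensor_comp]
  rfl

theorem Ctx.tt_inv (C : Ctx Sinv α β actM coactM actE coactE) (u : Module.End k M)
    (t : Finset ℕ) (u₀ : ℕ → Module.End k M) (u₁ : ℕ → H)
    (hu : coactE u = ∑ j ∈ t, u₀ j ⊗ₜ[k] u₁ j) :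
    ∑ j ∈ t, tt α actM coactE (u₀ j) * fa α actM (HopfAlgebra.antipode k (u₁ j)) = u := by
  let K : H ⊗[k] H →ₗ[k] Module.End k M :=
    PhG (fa α actM) (fa α actM ∘ₗ HopfAlgebra.antipode k)
  have hK : ∀ h, K (comul (R := k) h) = counit (R := k) h • 1 := by
    intro h
    obtain ⟨s, p, q, hh⟩ := exists_rep (comul (R := k) h)
    have := conv_rep (toConv (fa α actM)) (toConv (fa α actM ∘ₗ HopfAlgebra.antipode k))
      h s p q hh
    rw [conv_antipode_right _ C.fa_one C.fa_mul] at this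
    rw [hh, map_sum]
    refine this.symm.trans ?_
    simp [Algebra.algebraMap_eq_smul_one]
  have key := C.coassoc u t u₀ u₁ hu (PhG LinearMap.id K)
  have e1 : ∀ j, PhG LinearMap.id K (TensorProduct.assoc k _ H H (coactE (u₀ j) ⊗ₜ u₁ j))
      = tt α actM coactE (u₀ j) * fa α actM (HopfAlgebra.antipode k (u₁ j)) := by
    intro j
    obtain ⟨s, a, b, hab⟩ := exists_rep (coactE (u₀ j))
    rw [tt_rep _ s a b hab, hab, TensorProduct.sum_tmul, map_sum, map_sum, Finset.sum_mul]
    refine Finset.sum_congr rfl fun i _ => ?_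
    rw [mul_assoc]
    rfl
  simp only [e1, PhG_tmul, hK] at key
  rw [key]
  have := coactE_counit C.hS C.comod C.hcoactE u
  rw [hu] at this
  simpa using this

end Final
end GYDProof

theorem statement_14
    (k H : Type) [Field k] [Ring H] [HopfAlgebra k H]
    (Sinv : H → H) (hS : GYD.IsAntipodeInv k H Sinv)
    (α β : H ≃ₗ[k] H)
    (hα : GYD.IsHopfAut k H α) (hβ : GYD.IsHopfAut k H β)
    (M : Type) [AddCommGroup M] [Module k M] [FiniteDimensional k M]
    (actM : H →ₗ[k] M →ₗ[k] M) (coactM : M →ₗ[k] M ⊗[k] H)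
    (hM : GYD.IsYD k H Sinv ⇑α ⇑β actM coactM)
    -- End(M) with its Yetter-Drinfeld algebra structure
    (actE : H →ₗ[k] Module.End k M →ₗ[k] Module.End k M)
    (coactE : Module.End k M →ₗ[k] Module.End k M ⊗[k] H)
    (hactE : GYD.EndActChar k H ⇑α.symm actM actE)
    (hcoactE : GYD.EndCoactChar k H Sinv coactM coactE)
    -- End(M')^op, where M' is the (αβ⁻¹α, α)-Yetter-Drinfeld module with coaction
    -- m ↦ m₍₀₎ ⊗ αβ⁻¹(m₍₁₎)
    (actO : H →ₗ[k] (Module.End k M)ᵐᵒᵖ →ₗ[k] (Module.End k M)ᵐᵒᵖ)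
    (coactO : (Module.End k M)ᵐᵒᵖ →ₗ[k] (Module.End k M)ᵐᵒᵖ ⊗[k] H)
    (hactO : GYD.EndOpActChar k H ⇑α.symm Sinv actM actO)
    (hcoactO : GYD.EndOpCoactChar k H
      ((LinearMap.lTensor M (β.symm.trans α).toLinearMap) ∘ₗ coactM) coactO)
    -- the map τ : End(M)-bar → End(M')^op, τ(u)(m) = u₍₀₎(α⁻¹(u₍₁₎)·m)
    (τ : Module.End k M →ₗ[k] (Module.End k M)ᵐᵒᵖ)
    (hτ : ∀ (u : Module.End k M) (m : M) (t : Finset ℕ)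
        (u₀ : ℕ → Module.End k M) (u₁ : ℕ → H),
        coactE u = ∑ j ∈ t, u₀ j ⊗ₜ[k] u₁ j →
        (τ u).unop m = ∑ j ∈ t, u₀ j (actM (α.symm (u₁ j)) m))
    -- the map τ⁻¹(v)(m) = v₍₀₎(α⁻¹(S(v₍₁₎))·m)
    (σ : (Module.End k M)ᵐᵒᵖ →ₗ[k] Module.End k M)
    (hσ : ∀ (v : (Module.End k M)ᵐᵒᵖ) (m : M) (t : Finset ℕ)
        (v₀ : ℕ → (Module.End k M)ᵐᵒᵖ) (v₁ : ℕ → H),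
        coactO v = ∑ j ∈ t, v₀ j ⊗ₜ[k] v₁ j →
        σ v m = ∑ j ∈ t, (v₀ j).unop
          (actM (α.symm (HopfAlgebra.antipode (R := k) (v₁ j))) m)) :
    Function.Bijective τ ∧
    -- τ is multiplicative from the H-opposite of End(M) to End(M')^op:
    -- τ(u * v) = τ(u)τ(v), where u * v = v₍₀₎ ∘ (v₍₁₎ · u)
    (∀ (u v : Module.End k M) (t : Finset ℕ) (v₀ : ℕ → Module.End k M) (v₁ : ℕ → H),
        coactE v = ∑ j ∈ t, v₀ j ⊗ₜ[k] v₁ j →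
        τ (∑ j ∈ t, v₀ j * actE (v₁ j) u) = τ u * τ v) ∧
    τ 1 = 1 ∧
    -- τ is H-linear
    (∀ (h : H) (u : Module.End k M), τ (actE h u) = actO h (τ u)) ∧
    -- τ is H-colinear
    (∀ u : Module.End k M, coactO (τ u) = LinearMap.rTensor H τ (coactE u)) ∧
    -- σ is a two-sided inverse for τ
    (∀ u : Module.End k M, σ (τ u) = u) ∧
    (∀ v : (Module.End k M)ᵐᵒᵖ, τ (σ v) = v) := by
  have C : GYDProof.Ctx Sinv α β actM coactM actE coactE := ⟨hS, hα, hβ, hM, hactE, hcoactE⟩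
  have hτ' : ∀ u, (τ u).unop = GYDProof.tt α actM coactE u := by
    intro u
    obtain ⟨t, u₀, u₁, hu⟩ := GYDProof.exists_rep (coactE u)
    ext m
    rw [hτ u m t u₀ u₁ hu, GYDProof.tt_rep u t u₀ u₁ hu, LinearMap.sum_apply]
    rfl
  have hcol := C.colin hcoactO τ hτ'
  have hστ : ∀ u, σ (τ u) = u := by
    intro u
    obtain ⟨t, u₀, u₁, hu⟩ := GYDProof.exists_rep (coactE u)
    have h1 : coactO (τ u) = ∑ j ∈ t, τ (u₀ j) ⊗ₜ[k] u₁ j := by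
      rw [hcol, hu, map_sum]; rfl
    conv_rhs => rw [← C.tt_inv u t u₀ u₁ hu]
    ext m
    rw [hσ (τ u) m t _ u₁ h1, LinearMap.sum_apply]
    simp only [hτ']
    rfl
  have hinj : Function.Injective τ := Function.LeftInverse.injective hστ
  have hsurj : Function.Surjective τ := by
    refine (LinearMap.injective_iff_surjective_of_finrank_eq_finrank ?_).1 hinj
    exact (MulOpposite.opLinearEquiv k).finrank_eq
  refine ⟨⟨hinj, hsurj⟩, ?_, ?_, ?_, hcol, hστ, ?_⟩
  · intro u v t v₀ v₁ hv
    apply MulOpposite.unop_injective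
    rw [hτ', map_sum, C.tt_mul u v t v₀ v₁ hv, MulOpposite.unop_mul, hτ', hτ']
  · apply MulOpposite.unop_injective
    rw [hτ', C.tt_one, MulOpposite.unop_one]
  · intro h u
    apply MulOpposite.unop_injective
    obtain ⟨s, p, q, hh⟩ := GYDProof.exists_rep (Coalgebra.comul (R := k) h)
    ext m
    rw [hactO h (τ u) m s p q hh, hτ', C.tt_act u h s p q hh, LinearMap.sum_apply, hτ']
    rfl
  · intro v
    obtain ⟨u, rfl⟩ := hsurj v
    rw [hστ]

end
end

section
/- Let M be a finite-dimensional (α,β)-Yetter-Drinfeld module and N a finite-dimensional (γ,δ)-Yetter-Drinfeld module. Then the map φ : End(M) # End(N) → End(M ⊗̂ N), defined by φ(u # v)(m⊗n) = u(m₍₀₎) ⊗ (m₍₁₎·v)(n), where m₍₁₎·v refers to the left H-action on End(N), is an isomorphism of algebras in _H𝒴𝒟^H (a bijective algebra map which is H-linear and H-colinear). -/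
open TensorProduct

noncomputable section

namespace GYD

section helpers

variable {k H : Type} [Field k] [Ring H] [HopfAlgebra k H]

lemma nat_index (ι : Type) [Fintype ι] [Nonempty ι] :
    ∃ (s : Finset ℕ) (e : ℕ → ι), ∀ (V : Type) [AddCommMonoid V] (F : ι → V),
      ∑ n ∈ s, F (e n) = ∑ i, F i := by
  classical
  refine ⟨Finset.range (Fintype.card ι), fun n => if h : n < Fintype.card ι then
    (Fintype.equivFin ι).symm ⟨n, h⟩ else Classical.arbitrary ι, ?_⟩
  intro V _ F
  rw [Finset.sum_range]
  simp only [Fin.is_lt, dif_pos, Fin.eta]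
  exact Equiv.sum_comp (Fintype.equivFin ι).symm F

/-- A matrix of elements of `H` which is comultiplicative. -/
def IsMat (k : Type) {H : Type} [Field k] [Ring H] [HopfAlgebra k H]
    {ι : Type} [Fintype ι] [DecidableEq ι] (c : ι → ι → H) : Prop :=
  (∀ i j, Coalgebra.comul (R := k) (c i j) = ∑ l, c i l ⊗ₜ[k] c l j) ∧
  (∀ i j, Coalgebra.counit (R := k) (c i j) = if i = j then 1 else 0)

variable {ι κ : Type} [Fintype ι] [DecidableEq ι] [Fintype κ] [DecidableEq κ]

lemma IsMat.map {c : ι → ι → H} (hc : IsMat k c) (θ : H →ₐc[k] H) :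
    IsMat k (fun i j => θ (c i j)) := by
  refine ⟨fun i j => ?_, fun i j => ?_⟩
  · rw [← CoalgHomClass.map_comp_comul_apply, hc.1]
    simp
  · rw [CoalgHomClass.counit_comp_apply, hc.2]

lemma IsMat.mul_antipode {c : ι → ι → H} (hc : IsMat k c) (i j : ι) :
    ∑ l, c i l * HopfAlgebra.antipode k (c l j) = if i = j then 1 else 0 := by
  have := HopfAlgebra.mul_antipode_lTensor_comul_apply (R := k) (c i j)
  rw [hc.1, hc.2] at this
  simp only [map_sum, LinearMap.lTensor_tmul, LinearMap.mul'_apply] at this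
  rw [this]; split_ifs <;> simp

lemma IsMat.antipode_mul {c : ι → ι → H} (hc : IsMat k c) (i j : ι) :
    ∑ l, HopfAlgebra.antipode k (c i l) * c l j = if i = j then 1 else 0 := by
  have := HopfAlgebra.mul_antipode_rTensor_comul_apply (R := k) (c i j)
  rw [hc.1, hc.2] at this
  simp only [map_sum, LinearMap.rTensor_tmul, LinearMap.mul'_apply] at this
  rw [this]; split_ifs <;> simp

lemma antipode_inj {Sinv : H → H} (hS : IsAntipodeInv k H Sinv) :
    Function.Injective (HopfAlgebra.antipode k (A := H)) :=
  Function.LeftInverse.injective hS.2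

lemma IsMat.Sinv_mul {Sinv : H → H} (hS : IsAntipodeInv k H Sinv)
    {c : ι → ι → H} (hc : IsMat k c) (i j : ι) :
    ∑ l, Sinv (c l j) * c i l = if i = j then 1 else 0 := by
  apply antipode_inj hS
  rw [map_sum]
  simp only [HopfAlgebra.antipode_mul_antidistrib, hS.1]
  rw [hc.antipode_mul]
  split_ifs <;> simp

lemma IsMat.mul_Sinv {Sinv : H → H} (hS : IsAntipodeInv k H Sinv)
    {c : ι → ι → H} (hc : IsMat k c) (i j : ι) :
    ∑ l, c l j * Sinv (c i l) = if i = j then 1 else 0 := by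
  apply antipode_inj hS
  rw [map_sum]
  simp only [HopfAlgebra.antipode_mul_antidistrib, hS.1]
  rw [hc.mul_antipode]
  split_ifs <;> simp

lemma IsMat.prod {c : ι → ι → H} (hc : IsMat k c) {d : κ → κ → H} (hd : IsMat k d) :
    IsMat k (fun (x y : ι × κ) => d x.2 y.2 * c x.1 y.1) := by
  refine ⟨fun x y => ?_, fun x y => ?_⟩
  · rw [Bialgebra.comul_mul, hc.1, hd.1, Finset.sum_mul_sum, Fintype.sum_prod_type,
      Finset.sum_comm]
    simp
  · rw [Bialgebra.counit_mul, hc.2, hd.2]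
    rcases x with ⟨a, b⟩; rcases y with ⟨a', b'⟩
    by_cases h1 : a = a' <;> by_cases h2 : b = b' <;> simp [h1, h2]

/-- Matrix coefficients of a comodule. -/
lemma isMat_of_indep {M : Type} [AddCommGroup M] [Module k M] (coact : M →ₗ[k] M ⊗[k] H)
    (b : ι → M) (hb : LinearIndependent k b) (t : ι → ι → H)
    (hbt : ∀ j, coact (b j) = ∑ i, b i ⊗ₜ[k] t i j)
    (h1 : ∀ j, LinearMap.rTensor H coact (coact (b j))
      = (TensorProduct.assoc k M H H).symm
          (LinearMap.lTensor M (Coalgebra.comul (R := k)) (coact (b j))))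
    (h2 : ∀ j,
      TensorProduct.rid k M (LinearMap.lTensor M (Coalgebra.counit (R := k)) (coact (b j)))
        = b j) : IsMat k t := by
  obtain ⟨f, hf⟩ : ∃ f : ι → (M →ₗ[k] k), ∀ i j, f i (b j) = if i = j then 1 else 0 := by
    obtain ⟨g, hg⟩ := LinearMap.exists_leftInverse_of_injective (Finsupp.linearCombination k b)
      (LinearMap.ker_eq_bot.2 hb)
    refine ⟨fun i => Finsupp.lapply i ∘ₗ g, fun i j => ?_⟩
    have h3 := LinearMap.congr_fun hg (Finsupp.single j 1)
    simp only [LinearMap.comp_apply, Finsupp.linearCombination_single, one_smul,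
      LinearMap.id_apply] at h3
    simp [h3, Finsupp.single_apply, eq_comm]
  refine ⟨fun i j => ?_, fun i j => ?_⟩
  · have := congrArg (TensorProduct.lid k _ ∘ LinearMap.rTensor _ (f i) ∘
      TensorProduct.assoc k M H H) (h1 j)
    simp only [hbt, map_sum, Function.comp, LinearMap.rTensor_tmul, LinearMap.lTensor_tmul,
      LinearEquiv.apply_symm_apply, TensorProduct.sum_tmul, TensorProduct.assoc_tmul, hf,
      TensorProduct.lid_tmul, ite_smul, one_smul, zero_smul] at this
    rw [Finset.sum_comm] at this
    simpa using this.symm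
  · have := congrArg (f i) (h2 j)
    simp only [hbt, map_sum, LinearMap.lTensor_tmul, TensorProduct.rid_tmul, map_smul, hf] at this
    simpa using this

lemma exists_coeffs {M : Type} [AddCommGroup M] [Module k M] (b : Module.Basis ι k M)
    (x : M ⊗[k] H) : ∃ t : ι → H, x = ∑ i, b i ⊗ₜ[k] t i := by
  induction x with
  | zero => exact ⟨0, by simp⟩
  | tmul m h =>
    refine ⟨fun i => b.repr m i • h, ?_⟩
    simp only [← TensorProduct.smul_tmul]
    rw [← TensorProduct.sum_tmul, b.sum_repr m]
  | add x y hx hy =>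
    obtain ⟨t, rfl⟩ := hx
    obtain ⟨s, rfl⟩ := hy
    exact ⟨t + s, by simp [TensorProduct.tmul_add, Finset.sum_add_distrib]⟩

lemma exists_mat {M : Type} [AddCommGroup M] [Module k M] (b : Module.Basis ι k M)
    {Sinv α β : H → H} {act : H →ₗ[k] M →ₗ[k] M} {coact : M →ₗ[k] M ⊗[k] H}
    (hM : IsYD k H Sinv α β act coact) :
    ∃ t : ι → ι → H, IsMat k t ∧ ∀ j, coact (b j) = ∑ i, b i ⊗ₜ[k] t i j := by
  choose t ht using fun j => exists_coeffs (k := k) (H := H) b (coact (b j))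
  exact ⟨fun i j => t j i, isMat_of_indep coact b b.linearIndependent _ ht
    (fun j => hM.2.2.1 _) (fun j => hM.2.2.2.1 _), ht⟩

/-- Every element of `H` is a linear combination of entries of a comultiplicative matrix. -/
lemma exists_mat_of_elem (h : H) : ∃ (n : ℕ) (c : Fin n → Fin n → H) (a : Fin n → Fin n → k),
    IsMat k c ∧ h = ∑ i, ∑ j, a i j • c i j := by
  classical
  let B := Module.Basis.ofVectorSpace k H
  obtain ⟨p, hp⟩ : ∃ p : Module.Basis.ofVectorSpaceIndex k H →₀ H,
      Coalgebra.comul (R := k) h = p.sum fun i m => m ⊗ₜ[k] B i := by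
    refine ⟨TensorProduct.equivFinsuppOfBasisRight B (Coalgebra.comul (R := k) h), ?_⟩
    rw [← TensorProduct.equivFinsuppOfBasisRight_symm_apply, LinearEquiv.symm_apply_apply]
  let V : Submodule k H := Submodule.span k (Set.range p)
  have hfin : (Set.range p).Finite := by
    refine ((p.support.image p ∪ {0}).finite_toSet).subset ?_
    rintro _ ⟨i, rfl⟩
    by_cases hi : p i = 0
    · simp [hi]
    · simp only [Finset.coe_union, Set.mem_union, Finset.mem_coe, Finset.mem_image]
      exact Or.inl ⟨i, by simpa using hi, rfl⟩
  have : FiniteDimensional k V := FiniteDimensional.span_of_finite k hfin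
  have hpV : ∀ i, p i ∈ V := fun i => Submodule.subset_span ⟨i, rfl⟩
  have hhV : h ∈ V := by
    have := congrArg (TensorProduct.rid k H) (Coalgebra.lTensor_counit_comul (R := k) h)
    rw [hp, Finsupp.sum] at this
    simp only [map_sum, LinearMap.lTensor_tmul, TensorProduct.rid_tmul, one_smul] at this
    rw [← this]
    exact Submodule.sum_mem _ fun i _ => Submodule.smul_mem _ _ (hpV i)
  have hΔp : ∀ i, Coalgebra.comul (R := k) (p i) ∈ LinearMap.range (V.subtype.rTensor H) := by
    intro i
    have := congrArg (TensorProduct.rid k _ ∘ LinearMap.lTensor _ (B.coord i))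
      (Coalgebra.coassoc_symm_apply (R := k) h)
    rw [hp, Finsupp.sum] at this
    simp only [map_sum, Function.comp, LinearMap.rTensor_tmul, LinearMap.lTensor_tmul,
      TensorProduct.rid_tmul, Module.Basis.coord_apply, Module.Basis.repr_self,
      Finsupp.single_apply, ite_smul, one_smul, zero_smul, Finset.sum_ite_eq',
      Finsupp.mem_support_iff] at this
    have h3 : Coalgebra.comul (R := k) (p i) = if p i ≠ 0 then Coalgebra.comul (R := k) (p i)
        else 0 := by
      split_ifs with h0
      · rfl
      · rw [not_not.1 h0]; simp
    rw [h3, ← this]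
    refine Submodule.sum_mem _ fun j _ => ?_
    generalize Coalgebra.comul (R := k) (B j) = z
    induction z with
    | zero => simp
    | tmul x y =>
      refine ⟨(⟨p j, hpV j⟩ : V) ⊗ₜ[k] (B.repr y i • x), ?_⟩
      simp [TensorProduct.tmul_smul]
    | add x y hx hy =>
      rw [TensorProduct.tmul_add, map_add, map_add, map_add]
      exact Submodule.add_mem _ hx hy
  have hΔ : ∀ x ∈ V, Coalgebra.comul (R := k) x ∈ LinearMap.range (V.subtype.rTensor H) := by
    intro x hx
    have : V ≤ (LinearMap.range (V.subtype.rTensor H)).comap (Coalgebra.comul (R := k)) := by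
      rw [Submodule.span_le]
      rintro _ ⟨i, rfl⟩
      exact hΔp i
    exact this hx
  let b := Module.finBasis k V
  have : ∀ j, ∃ c : Fin (Module.finrank k V) → H,
      Coalgebra.comul (R := k) (b j : H) = ∑ i, (b i : H) ⊗ₜ[k] c i := by
    intro j
    obtain ⟨z, hz⟩ := hΔ _ (b j).2
    obtain ⟨t, rfl⟩ := exists_coeffs b z
    exact ⟨t, by rw [← hz]; simp⟩
  choose c hc using this
  have hmat : IsMat k (fun i j => c j i) := by
    refine isMat_of_indep (Coalgebra.comul (R := k)) (fun i => (b i : H)) ?_ _ hc ?_ ?_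
    · exact b.linearIndependent.map' V.subtype (Submodule.ker_subtype V)
    · intro j
      rw [Coalgebra.coassoc_symm_apply]
    · intro j
      rw [Coalgebra.lTensor_counit_comul]; simp
  refine ⟨_, _, fun i j => Coalgebra.counit (R := k) (b i : H) * b.repr ⟨h, hhV⟩ j, hmat, ?_⟩
  have h1 : ∀ j, (b j : H) = ∑ i, Coalgebra.counit (R := k) (b i : H) • c j i := by
    intro j
    have := congrArg (TensorProduct.lid k H) (Coalgebra.rTensor_counit_comul (R := k) (b j : H))
    rw [hc] at this
    simpa using this.symm
  have h2 : h = ∑ j, b.repr ⟨h, hhV⟩ j • (b j : H) := by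
    have := congrArg V.subtype (b.sum_repr ⟨h, hhV⟩)
    rw [map_sum] at this
    exact this.symm
  conv_lhs => rw [h2]
  rw [Finset.sum_comm]
  refine Finset.sum_congr rfl fun j _ => ?_
  conv_lhs => rw [h1 j]
  rw [Finset.smul_sum]
  exact Finset.sum_congr rfl fun i _ => by rw [smul_smul, mul_comm]

lemma exists_bialgHom (φ : H ≃ₗ[k] H) (hφ : IsHopfAut k H φ) :
    ∃ A : H →ₐc[k] H, ∀ h, A h = φ h := by
  let f : H →ₐ[k] H := AlgHom.ofLinearMap φ.toLinearMap hφ.2.1 hφ.1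
  refine ⟨BialgHom.ofAlgHom f ?_ ?_, fun h => rfl⟩
  · ext h
    exact hφ.2.2.2 h
  · ext h
    exact (hφ.2.2.1 h).symm

lemma isHopfAut_symm (φ : H ≃ₗ[k] H) (hφ : IsHopfAut k H φ) : IsHopfAut k H φ.symm := by
  refine ⟨fun x y => ?_, ?_, fun h => ?_, fun h => ?_⟩
  · apply φ.injective; simp [hφ.1]
  · apply φ.injective; simp [hφ.2.1]
  · have := hφ.2.2.1 (φ.symm h)
    rw [LinearEquiv.apply_symm_apply] at this
    rw [this, ← LinearMap.comp_apply, ← TensorProduct.map_comp]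
    simp
  · rw [← hφ.2.2.2, LinearEquiv.apply_symm_apply]

end helpers

end GYD

namespace GYD

section chars

variable {k H : Type} [Field k] [Ring H] [HopfAlgebra k H]
variable {ι κ : Type} [Fintype ι] [Fintype κ]
variable {M N : Type} [AddCommGroup M] [Module k M] [AddCommGroup N] [Module k N]

lemma endAct_fin {θ : H → H} {actM : H →ₗ[k] M →ₗ[k] M}
    {actE : H →ₗ[k] Module.End k M →ₗ[k] Module.End k M}
    (hE : EndActChar k H θ actM actE) (h : H) (p q : ι → H)
    (hpq : Coalgebra.comul (R := k) h = ∑ i, p i ⊗ₜ[k] q i) (u : Module.End k M) (m : M) :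
    actE h u m = ∑ i, actM (θ (p i)) (u (actM (θ (HopfAlgebra.antipode (R := k) (q i))) m)) := by
  rcases isEmpty_or_nonempty ι with hι | hι
  · have := hE h u m ∅ 0 0 (by simpa using hpq)
    simpa using this
  · obtain ⟨s, e, he⟩ := nat_index ι
    rw [hE h u m s (p ∘ e) (q ∘ e) (by rw [hpq, ← he]; rfl), ← he]
    rfl

lemma tensorAct_fin {θ₁ θ₂ : H → H} {actM : H →ₗ[k] M →ₗ[k] M} {actN : H →ₗ[k] N →ₗ[k] N}
    {act : H →ₗ[k] (M ⊗[k] N) →ₗ[k] (M ⊗[k] N)}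
    (hT : TensorActChar k H θ₁ θ₂ actM actN act) (h : H) (p q : ι → H)
    (hpq : Coalgebra.comul (R := k) h = ∑ i, p i ⊗ₜ[k] q i) (m : M) (n : N) :
    act h (m ⊗ₜ[k] n) = ∑ i, actM (θ₁ (p i)) m ⊗ₜ[k] actN (θ₂ (q i)) n := by
  rcases isEmpty_or_nonempty ι with hι | hι
  · have := hT h m n ∅ 0 0 (by simpa using hpq)
    simpa using this
  · obtain ⟨s, e, he⟩ := nat_index ι
    rw [hT h m n s (p ∘ e) (q ∘ e) (by rw [hpq, ← he]; rfl), ← he]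
    rfl

lemma exists_nat_repr {X Y : Type} [AddCommGroup X] [Module k X] [AddCommGroup Y] [Module k Y]
    (x : X ⊗[k] Y) : ∃ (s : Finset ℕ) (a : ℕ → X) (b : ℕ → Y), x = ∑ i ∈ s, a i ⊗ₜ[k] b i := by
  obtain ⟨n, a, b, rfl⟩ := TensorProduct.exists_sum_tmul_eq x
  rcases isEmpty_or_nonempty (Fin n) with hι | hι
  · exact ⟨∅, 0, 0, by simp⟩
  · obtain ⟨s, e, he⟩ := nat_index (Fin n)
    exact ⟨s, a ∘ e, b ∘ e, by rw [← he]; rfl⟩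

lemma tensorCoact_eq {coactM : M →ₗ[k] M ⊗[k] H} {coactN : N →ₗ[k] N ⊗[k] H}
    {coact : M ⊗[k] N →ₗ[k] (M ⊗[k] N) ⊗[k] H}
    (hT : TensorCoactChar k H coactM coactN coact) (m : M) (n : N) :
    coact (m ⊗ₜ[k] n) = TensorProduct.map₂ (TensorProduct.mk k M N) (LinearMap.mul k H).flip
      (coactM m) (coactN n) := by
  obtain ⟨s, a, b, h1⟩ := exists_nat_repr (coactM m)
  obtain ⟨t, a', b', h2⟩ := exists_nat_repr (coactN n)
  rw [hT m n s t a b a' b' h1 h2, h1, h2]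
  simp only [map_sum, LinearMap.sum_apply, TensorProduct.map₂_apply_tmul,
    TensorProduct.map_tmul, TensorProduct.mk_apply,
    LinearMap.flip_apply, LinearMap.mul_apply']
  rw [Finset.sum_comm]

lemma endCoact_fin {Sinv : H → H} {coactM : M →ₗ[k] M ⊗[k] H}
    {coactE : Module.End k M →ₗ[k] Module.End k M ⊗[k] H}
    (hE : EndCoactChar k H Sinv coactM coactE) (u : Module.End k M) (m : M)
    (b : ι → M) (t : ι → H) (hm : coactM m = ∑ i, b i ⊗ₜ[k] t i) :
    LinearMap.rTensor H (LinearMap.applyₗ (R := k) m) (coactE u)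
      = ∑ i, LinearMap.lTensor M (LinearMap.mulLeft k (Sinv (t i))) (coactM (u (b i))) := by
  choose r n0 n1 hr using fun i => exists_nat_repr (coactM (u (b i)))
  rcases isEmpty_or_nonempty ι with hι | hι
  · have := hE u m ∅ 0 0 (fun _ => ∅) 0 0 (by simpa using hm) (by simp)
    simpa using this
  · obtain ⟨s, e, he⟩ := nat_index ι
    rw [hE u m s (b ∘ e) (t ∘ e) (r ∘ e) (n0 ∘ e) (n1 ∘ e) (by rw [hm, ← he]; rfl)
      (fun j _ => hr _), ← he]
    refine Finset.sum_congr rfl fun j _ => ?_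
    rw [hr]
    simp

lemma phi_eq {coactM : M →ₗ[k] M ⊗[k] H}
    {actEN : H →ₗ[k] Module.End k N →ₗ[k] Module.End k N}
    {φ : Module.End k M ⊗[k] Module.End k N →ₗ[k] Module.End k (M ⊗[k] N)}
    (hφ : ∀ (u : Module.End k M) (v : Module.End k N) (m : M) (n : N)
        (t : Finset ℕ) (m₀ : ℕ → M) (m₁ : ℕ → H),
        coactM m = ∑ j ∈ t, m₀ j ⊗ₜ[k] m₁ j →
        φ (u ⊗ₜ[k] v) (m ⊗ₜ[k] n) = ∑ j ∈ t, u (m₀ j) ⊗ₜ[k] (actEN (m₁ j) v) n)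
    (u : Module.End k M) (v : Module.End k N) (m : M) (n : N) :
    φ (u ⊗ₜ[k] v) (m ⊗ₜ[k] n) = TensorProduct.map u
      ((LinearMap.applyₗ (R := k) n) ∘ₗ actEN.flip v) (coactM m) := by
  obtain ⟨s, a, b, h1⟩ := exists_nat_repr (coactM m)
  rw [hφ u v m n s a b h1, h1]
  simp

variable [DecidableEq ι]

/-- Inverse-free form of the Yetter-Drinfeld condition. -/
lemma yd_mat {Sinv : H → H} (hS : IsAntipodeInv k H Sinv) (α β : H →ₐc[k] H)
    {act : H →ₗ[k] M →ₗ[k] M} {coact : M →ₗ[k] M ⊗[k] H}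
    (hM : IsYD k H Sinv α β act coact) {c : ι → ι → H} (hc : IsMat k c) (i j : ι) (m : M) :
    ∑ l, LinearMap.lTensor M (LinearMap.mulRight k (α (c i l))) (coact (act (c l j) m))
      = ∑ r, TensorProduct.map (act (c i r)) (LinearMap.mulLeft k (β (c r j))) (coact m) := by
  obtain ⟨s, a, b, h1⟩ := exists_nat_repr (coact m)
  have key : ∀ l, coact (act (c l j) m) = ∑ x : ι, ∑ r : ι, ∑ q ∈ s,
      act (c x r) (a q) ⊗ₜ[k] (β (c r j) * b q * α (Sinv (c l x))) := by
    intro l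
    have : Nonempty ι := ⟨i⟩
    obtain ⟨t, e, he⟩ := nat_index (ι × ι)
    rw [hM.2.2.2.2 (c l j) m t s (fun n => c l (e n).1) (fun n => c (e n).1 (e n).2)
      (fun n => c (e n).2 j) a b ?_ h1]
    · rw [he _ (fun x : ι × ι => ∑ q ∈ s,
        act (c x.1 x.2) (a q) ⊗ₜ[k] (β (c x.2 j) * b q * α (Sinv (c l x.1)))),
        Fintype.sum_prod_type]
    · rw [he _ (fun x : ι × ι => (c l x.1 ⊗ₜ[k] c x.1 x.2) ⊗ₜ[k] c x.2 j),
        Fintype.sum_prod_type, Finset.sum_comm, hc.1]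
      simp only [map_sum, LinearMap.rTensor_tmul, hc.1, TensorProduct.sum_tmul]
  simp only [key, map_sum, h1, LinearMap.lTensor_tmul, LinearMap.mulRight_apply,
    TensorProduct.map_tmul, LinearMap.mulLeft_apply, mul_assoc, ← map_mul]
  rw [Finset.sum_comm]
  have : ∀ x, ∑ l, ∑ r, ∑ q ∈ s, act (c x r) (a q) ⊗ₜ[k]
      (β (c r j) * (b q * α (Sinv (c l x) * c i l)))
      = if i = x then ∑ r, ∑ q ∈ s, act (c x r) (a q) ⊗ₜ[k] (β (c r j) * b q) else 0 := by
    intro x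
    rw [Finset.sum_comm]
    have h2 : ∀ r, ∑ l, ∑ q ∈ s, act (c x r) (a q) ⊗ₜ[k]
      (β (c r j) * (b q * α (Sinv (c l x) * c i l)))
      = if i = x then ∑ q ∈ s, act (c x r) (a q) ⊗ₜ[k] (β (c r j) * b q) else 0 := by
      intro r
      rw [Finset.sum_comm]
      simp only [← TensorProduct.tmul_sum, ← Finset.mul_sum, ← map_sum, hc.Sinv_mul hS]
      split_ifs <;> simp
    simp only [h2]
    split_ifs <;> simp
  simp only [this]
  simp

section endmod

variable {A : H →ₐc[k] H} {act : H →ₗ[k] M →ₗ[k] M}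
    {actE : H →ₗ[k] Module.End k M →ₗ[k] Module.End k M}
     {c : ι → ι → H}

lemma endAct_mul
    (hmul : ∀ g h m, act (g * h) m = act g (act h m))
    (hE : EndActChar k H A act actE)
    (g h : H) (u : Module.End k M) : actE (g * h) u = actE g (actE h u) := by
  obtain ⟨n, p, q, hg⟩ := TensorProduct.exists_sum_tmul_eq (Coalgebra.comul (R := k) g)
  obtain ⟨n', p', q', hh⟩ := TensorProduct.exists_sum_tmul_eq (Coalgebra.comul (R := k) h)
  ext m
  rw [endAct_fin hE g p q hg, endAct_fin (ι := Fin n × Fin n') hE (g * h)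
    (fun x => p x.1 * p' x.2) (fun x => q x.1 * q' x.2), Fintype.sum_prod_type]
  · simp only [endAct_fin hE h p' q' hh, HopfAlgebra.antipode_mul_antidistrib, map_mul, hmul,
      map_sum]
  · rw [Bialgebra.comul_mul, hg, hh, Finset.sum_mul_sum, Fintype.sum_prod_type]
    simp

lemma endAct_one_left
    (hone : ∀ m, act 1 m = m)
    (hE : EndActChar k H A act actE)
    (u : Module.End k M) : actE 1 u = u := by
  ext m
  rw [endAct_fin (ι := Unit) hE 1 (fun _ => 1) (fun _ => 1)]
  · simp [hone]
  · simp [Algebra.TensorProduct.one_def]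

lemma act_antipode
    (hone : ∀ m, act 1 m = m)
    (hmul : ∀ g h m, act (g * h) m = act g (act h m))
    (hc : IsMat k c)
    (A : H →ₐc[k] H) (i j : ι) (m : M) :
    ∑ l, act (A (HopfAlgebra.antipode k (c i l))) (act (A (c l j)) m)
      = if i = j then m else 0 := by
  simp only [← hmul, ← map_mul, ← LinearMap.sum_apply, ← map_sum, hc.antipode_mul]
  split_ifs <;> simp [hone]

lemma act_antipode'
    (hone : ∀ m, act 1 m = m)
    (hmul : ∀ g h m, act (g * h) m = act g (act h m))
    (hc : IsMat k c)
    (A : H →ₐc[k] H) (i j : ι) (m : M) :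
    ∑ l, act (A (c i l)) (act (A (HopfAlgebra.antipode k (c l j))) m)
      = if i = j then m else 0 := by
  simp only [← hmul, ← map_mul, ← LinearMap.sum_apply, ← map_sum, hc.mul_antipode]
  split_ifs <;> simp [hone]

lemma endAct_mat
    (hone : ∀ m, act 1 m = m)
    (hmul : ∀ g h m, act (g * h) m = act g (act h m))
    (hE : EndActChar k H A act actE)
    (hc : IsMat k c)
    (i j : ι) (u : Module.End k M) (m : M) :
    ∑ l, actE (c i l) u (act (A (c l j)) m) = act (A (c i j)) (u m) := by
  simp only [fun l => endAct_fin hE (c i l) _ _ (hc.1 i l)]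
  rw [Finset.sum_comm]
  simp only [← map_sum, act_antipode hone hmul hc]
  simp [apply_ite]

lemma endAct_one
    (hone : ∀ m, act 1 m = m)
    (hmul : ∀ g h m, act (g * h) m = act g (act h m))
    (hE : EndActChar k H A act actE)
    (hc : IsMat k c)
    (i j : ι) : actE (c i j) 1 = if i = j then 1 else 0 := by
  ext m
  rw [endAct_fin hE (c i j) _ _ (hc.1 i j)]
  simp only [Module.End.one_apply, act_antipode' hone hmul hc]
  split_ifs <;> simp

lemma endAct_mulEnd
    (hone : ∀ m, act 1 m = m)
    (hmul : ∀ g h m, act (g * h) m = act g (act h m))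
    (hE : EndActChar k H A act actE)
    (hc : IsMat k c)
    (i j : ι) (u v : Module.End k M) :
    actE (c i j) (u * v) = ∑ l, actE (c i l) u * actE (c l j) v := by
  ext m
  rw [endAct_fin hE (c i j) _ _ (hc.1 i j)]
  simp only [LinearMap.sum_apply, Module.End.mul_apply]
  simp only [fun l m => endAct_fin hE (c l j) _ _ (hc.1 l j) v m]
  simp only [map_sum]
  rw [Finset.sum_comm]
  simp only [endAct_mat hone hmul hE hc]

lemma cancel
    (hone : ∀ m, act 1 m = m)
    (hmul : ∀ g h m, act (g * h) m = act g (act h m))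
    (hc : IsMat k c)
    (A : H →ₐc[k] H) {W : Type} [AddCommGroup W] [Module k W] (F G : ι → M →ₗ[k] W)
    (hFG : ∀ j m, ∑ l, F l (act (A (c l j)) m) = ∑ l, G l (act (A (c l j)) m)) (j : ι) :
    F j = G j := by
  ext m
  have h1 : ∀ F : ι → M →ₗ[k] W, ∑ r, ∑ l, F l (act (A (c l r))
      (act (A (HopfAlgebra.antipode k (c r j))) m)) = F j m := by
    intro F
    rw [Finset.sum_comm]
    simp only [← map_sum, act_antipode' hone hmul hc]
    simp [apply_ite]
  rw [← h1 F, ← h1 G]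
  exact Finset.sum_congr rfl fun r _ => hFG r _

end endmod

section tensormod

variable {A B : H →ₐc[k] H} {actM : H →ₗ[k] M →ₗ[k] M} {actN : H →ₗ[k] N →ₗ[k] N}
    {act : H →ₗ[k] (M ⊗[k] N) →ₗ[k] (M ⊗[k] N)}

lemma tensorAct_one (hM : ∀ m, actM 1 m = m) (hN : ∀ m, actN 1 m = m)
    (hT : TensorActChar k H A B actM actN act) (x : M ⊗[k] N) : act 1 x = x := by
  induction x with
  | zero => simp
  | add x y hx hy => rw [map_add, hx, hy]
  | tmul m n =>
    rw [tensorAct_fin (ι := Unit) hT 1 (fun _ => 1) (fun _ => 1)]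
    · simp [hM, hN]
    · simp [Algebra.TensorProduct.one_def]

lemma tensorAct_mul (hM : ∀ g h m, actM (g * h) m = actM g (actM h m))
    (hN : ∀ g h m, actN (g * h) m = actN g (actN h m))
    (hT : TensorActChar k H A B actM actN act) (g h : H) (x : M ⊗[k] N) :
    act (g * h) x = act g (act h x) := by
  obtain ⟨n, p, q, hg⟩ := TensorProduct.exists_sum_tmul_eq (Coalgebra.comul (R := k) g)
  obtain ⟨n', p', q', hh⟩ := TensorProduct.exists_sum_tmul_eq (Coalgebra.comul (R := k) h)
  induction x with
  | zero => simp
  | add x y hx hy => simp only [map_add, hx, hy]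
  | tmul m n =>
    rw [tensorAct_fin hT h p' q' hh, map_sum,
      tensorAct_fin (ι := Fin _ × Fin _) hT (g * h)
      (fun x => p x.1 * p' x.2) (fun x => q x.1 * q' x.2), Fintype.sum_prod_type,
      Finset.sum_comm]
    · simp only [tensorAct_fin hT g p q hg, map_mul, hM, hN]
    · rw [Bialgebra.comul_mul, hg, hh, Finset.sum_mul_sum, Fintype.sum_prod_type]
      simp

end tensormod

section endcoact

variable {Sinv : H → H}  {coactM : M →ₗ[k] M ⊗[k] H}
    {coactE : Module.End k M →ₗ[k] Module.End k M ⊗[k] H}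
      {t : ι → ι → H}

lemma endCoact_mat
    (hS : IsAntipodeInv k H Sinv)
    (hE : EndCoactChar k H Sinv coactM coactE)
    (b : Module.Basis ι k M)
    (ht : IsMat k t)
    (hbt : ∀ j, coactM (b j) = ∑ i, b i ⊗ₜ[k] t i j)
    (u : Module.End k M) (j : ι) :
    ∑ i, LinearMap.lTensor M (LinearMap.mulLeft k (t i j))
      (LinearMap.rTensor H (LinearMap.applyₗ (R := k) (b i)) (coactE u)) = coactM (u (b j)) := by
  simp only [fun i => endCoact_fin hE u (b i) _ _ (hbt i), map_sum]
  rw [Finset.sum_comm]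
  simp only [← LinearMap.lTensor_comp_apply, ← LinearMap.mulLeft_mul]
  have h1 : ∀ l, ∑ i, LinearMap.lTensor M (LinearMap.mulLeft k (t i j * Sinv (t l i)))
      (coactM (u (b l))) = if l = j then coactM (u (b l)) else 0 := by
    intro l
    have := ht.mul_Sinv hS l j
    generalize coactM (u (b l)) = z
    induction z with
    | zero => simp
    | add x y hx hy =>
      simp only [map_add, Finset.sum_add_distrib, hx, hy]
      split_ifs <;> simp
    | tmul x y =>
      simp only [LinearMap.lTensor_tmul, LinearMap.mulLeft_apply, ← TensorProduct.tmul_sum,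
        ← Finset.sum_mul, this]
      split_ifs <;> simp
  simp only [h1]
  simp

lemma end_tensor_ext (b : Module.Basis ι k M) (x y : Module.End k M ⊗[k] H)
    (hxy : ∀ i, LinearMap.rTensor H (LinearMap.applyₗ (R := k) (b i)) x
      = LinearMap.rTensor H (LinearMap.applyₗ (R := k) (b i)) y) : x = y := by
  have h1 : ∀ z : Module.End k M ⊗[k] H, ∑ i,
      LinearMap.rTensor H ((LinearMap.smulRightₗ (R := k) (b.coord i)))
        (LinearMap.rTensor H (LinearMap.applyₗ (R := k) (b i)) z) = z := by
    intro z
    induction z with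
    | zero => simp
    | add x y hx hy =>
      simp only [map_add, Finset.sum_add_distrib, hx, hy]
    | tmul x y =>
      simp only [LinearMap.rTensor_tmul, ← TensorProduct.sum_tmul]
      congr 1
      refine b.ext fun j => ?_
      simp [Finsupp.single_apply, LinearMap.sum_apply]
  rw [← h1 x, ← h1 y]
  simp only [hxy]

lemma endCoact_unique
    (hS : IsAntipodeInv k H Sinv)
    (hE : EndCoactChar k H Sinv coactM coactE)
    (b : Module.Basis ι k M)
    (ht : IsMat k t)
    (hbt : ∀ j, coactM (b j) = ∑ i, b i ⊗ₜ[k] t i j)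
    (u : Module.End k M) (x : Module.End k M ⊗[k] H)
    (hx : ∀ j, ∑ i, LinearMap.lTensor M (LinearMap.mulLeft k (t i j))
      (LinearMap.rTensor H (LinearMap.applyₗ (R := k) (b i)) x) = coactM (u (b j))) :
    coactE u = x := by
  refine end_tensor_ext b _ _ fun i => ?_
  rw [endCoact_fin hE u (b i) _ _ (hbt i)]
  simp only [← hx, map_sum, ← LinearMap.lTensor_comp_apply, ← LinearMap.mulLeft_mul]
  rw [Finset.sum_comm]
  have h1 : ∀ l, ∑ j, LinearMap.lTensor M (LinearMap.mulLeft k (Sinv (t j i) * t l j))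
      (LinearMap.rTensor H (LinearMap.applyₗ (R := k) (b l)) x)
      = if l = i then LinearMap.rTensor H (LinearMap.applyₗ (R := k) (b l)) x else 0 := by
    intro l
    have := ht.Sinv_mul hS l i
    generalize LinearMap.rTensor H (LinearMap.applyₗ (R := k) (b l)) x = z
    induction z with
    | zero => simp
    | add x y hx hy =>
      simp only [map_add, Finset.sum_add_distrib, hx, hy]
      split_ifs <;> simp
    | tmul x y =>
      simp only [LinearMap.lTensor_tmul, LinearMap.mulLeft_apply, ← TensorProduct.tmul_sum,
        ← Finset.sum_mul, this]
      split_ifs <;> simp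
  simp only [h1]
  simp

end endcoact

end chars

end GYD

namespace GYD

section main

variable {k H : Type} [Field k] [Ring H] [HopfAlgebra k H]
variable {ι κ : Type} [Fintype ι] [Fintype κ] [DecidableEq ι] [DecidableEq κ]
variable {M N : Type} [AddCommGroup M] [Module k M] [AddCommGroup N] [Module k N]

/-- Key lemma on the coaction of `(h · v)(n)`. -/
lemma key_coact {Sinv : H → H} (hS : IsAntipodeInv k H Sinv) (γ δ A : H →ₐc[k] H)
    (hγA : ∀ h, γ (A h) = h)
    {act : H →ₗ[k] N →ₗ[k] N} {coact : N →ₗ[k] N ⊗[k] H}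
    (hN : IsYD k H Sinv γ δ act coact)
    {actE : H →ₗ[k] Module.End k N →ₗ[k] Module.End k N}
    (hE : EndActChar k H A act actE)
    {coactE : Module.End k N →ₗ[k] Module.End k N ⊗[k] H}
    (hcE : EndCoactChar k H Sinv coact coactE)
    (b : Module.Basis κ k N) {s : κ → κ → H}
    (hs : IsMat k s) (hbs : ∀ j, coact (b j) = ∑ i, b i ⊗ₜ[k] s i j)
    {c : ι → ι → H} (hc : IsMat k c) (v : Module.End k N)
    (S : Finset ℕ) (v0 : ℕ → Module.End k N) (v1 : ℕ → H)
    (hv : coactE v = ∑ q ∈ S, v0 q ⊗ₜ[k] v1 q) (i j : ι) (n : N) :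
    ∑ l, ∑ q ∈ S, TensorProduct.map (actE (c i l) (v0 q))
        (LinearMap.mulRight k (c l j * v1 q)) (coact n)
      = ∑ l, LinearMap.lTensor N (LinearMap.mulRight k (c i l)) (coact (actE (c l j) v n)) := by
  have hone := hN.1
  have hmul := hN.2.1
  have hd : IsMat k (fun i j => A (c i j)) := hc.map A
  let F : ι → N →ₗ[k] N ⊗[k] H := fun j => ∑ l, ∑ q ∈ S,
    (TensorProduct.map (actE (c i l) (v0 q)) (LinearMap.mulRight k (c l j * v1 q))) ∘ₗ coact
  let G : ι → N →ₗ[k] N ⊗[k] H := fun j => ∑ l,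
    LinearMap.lTensor N (LinearMap.mulRight k (c i l)) ∘ₗ coact ∘ₗ actE (c l j) v
  have hFG : F j = G j := by
    refine cancel hone hmul hc A F G (fun j n => ?_) j
    have hyd : ∀ i m, ∑ l, LinearMap.lTensor N (LinearMap.mulRight k (c i l))
        (coact (act (A (c l j)) m)) = ∑ r, TensorProduct.map (act (A (c i r)))
          (LinearMap.mulLeft k (δ (A (c r j)))) (coact m) := by
      intro i m
      have := yd_mat hS γ δ hN hd i j m
      simpa only [hγA] using this
    have hG : ∑ l, G l (act (A (c l j)) n) = ∑ r, TensorProduct.map (act (A (c i r)))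
          (LinearMap.mulLeft k (δ (A (c r j)))) (coact (v n)) := by
      simp only [G, LinearMap.sum_apply, LinearMap.comp_apply]
      rw [Finset.sum_comm]
      simp only [← map_sum, endAct_mat hone hmul hE hc]
      exact hyd i _
    have hF : ∑ l, F l (act (A (c l j)) n) = ∑ q ∈ S, ∑ r, TensorProduct.map
        (act (A (c i r)) ∘ₗ v0 q)
          (LinearMap.mulLeft k (δ (A (c r j))) ∘ₗ LinearMap.mulRight k (v1 q)) (coact n) := by
      simp only [F, LinearMap.sum_apply, LinearMap.comp_apply]
      have h1 : ∀ x l q, TensorProduct.map (actE (c i l) (v0 q))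
          (LinearMap.mulRight k (c l x * v1 q)) (coact (act (A (c x j)) n))
          = TensorProduct.map (actE (c i l) (v0 q)) (LinearMap.mulRight k (v1 q))
            (LinearMap.lTensor N (LinearMap.mulRight k (c l x)) (coact (act (A (c x j)) n))) := by
        intro x l q
        generalize coact (act (A (c x j)) n) = z
        rw [LinearMap.mulRight_mul, LinearMap.lTensor, ← LinearMap.comp_apply,
          ← TensorProduct.map_comp, LinearMap.comp_id]
      simp only [h1]
      rw [Finset.sum_comm]
      have h2 : ∀ l, ∑ x, ∑ q ∈ S, TensorProduct.map (actE (c i l) (v0 q))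
            (LinearMap.mulRight k (v1 q))
            (LinearMap.lTensor N (LinearMap.mulRight k (c l x)) (coact (act (A (c x j)) n)))
          = ∑ q ∈ S, ∑ r, TensorProduct.map (actE (c i l) (v0 q)) (LinearMap.mulRight k (v1 q))
            (TensorProduct.map (act (A (c l r)))
          (LinearMap.mulLeft k (δ (A (c r j)))) (coact n)) := by
        intro l
        rw [Finset.sum_comm]
        simp only [← map_sum, hyd]
      simp only [h2]
      rw [Finset.sum_comm]
      refine Finset.sum_congr rfl fun q _ => ?_
      rw [Finset.sum_comm]
      refine Finset.sum_congr rfl fun r _ => ?_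
      generalize coact n = z
      induction z with
      | zero => simp
      | add x y hx hy => simp only [map_add, Finset.sum_add_distrib, hx, hy]
      | tmul x y =>
        simp only [TensorProduct.map_tmul, ← TensorProduct.sum_tmul, endAct_mat hone hmul hE hc,
          LinearMap.comp_apply, LinearMap.mulLeft_apply, LinearMap.mulRight_apply, mul_assoc]
    rw [hF, hG, Finset.sum_comm]
    refine Finset.sum_congr rfl fun r _ => ?_
    have h3 : coact (v n) = ∑ q ∈ S, TensorProduct.map (v0 q) (LinearMap.mulRight k (v1 q))
        (coact n) := by
      have h4 : coact ∘ₗ v = ∑ q ∈ S, TensorProduct.map (v0 q) (LinearMap.mulRight k (v1 q))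
          ∘ₗ coact := by
        refine b.ext fun a => ?_
        simp only [LinearMap.comp_apply, LinearMap.sum_apply]
        rw [← endCoact_mat hS hcE b hs hbs v a, hv]
        simp only [map_sum, hbs, LinearMap.rTensor_tmul, LinearMap.lTensor_tmul,
          TensorProduct.map_tmul, LinearMap.mulLeft_apply, LinearMap.mulRight_apply]
        rw [Finset.sum_comm]
        rfl
      have := LinearMap.congr_fun h4 n
      simpa only [LinearMap.sum_apply, LinearMap.comp_apply] using this
    rw [h3, map_sum]
    refine Finset.sum_congr rfl fun q _ => ?_
    rw [TensorProduct.map_comp]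
    rfl
  have := LinearMap.congr_fun hFG n
  simpa only [F, G, LinearMap.sum_apply, LinearMap.comp_apply] using this

lemma end_ext (b : Module.Basis ι k M) (f g : Module.End k (M ⊗[k] N))
    (hfg : ∀ j n, f (b j ⊗ₜ[k] n) = g (b j ⊗ₜ[k] n)) : f = g := by
  refine TensorProduct.ext (b.ext fun j => ?_)
  ext n
  exact hfg j n

section phi

variable {coactM : M →ₗ[k] M ⊗[k] H} {actN : H →ₗ[k] N →ₗ[k] N}
    {actEN : H →ₗ[k] Module.End k N →ₗ[k] Module.End k N}
    {φ : Module.End k M ⊗[k] Module.End k N →ₗ[k] Module.End k (M ⊗[k] N)}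
     {t : ι → ι → H}
    {A : H →ₐc[k] H}
    {Sinv : H → H}

lemma phi_basis
    (hφ : ∀ (u : Module.End k M) (v : Module.End k N) (m : M) (n : N),
      φ (u ⊗ₜ[k] v) (m ⊗ₜ[k] n) = TensorProduct.map u
      ((LinearMap.applyₗ (R := k) n) ∘ₗ actEN.flip v) (coactM m))
    (b : Module.Basis ι k M)
    (hbt : ∀ j, coactM (b j) = ∑ i, b i ⊗ₜ[k] t i j)
    (u : Module.End k M) (v : Module.End k N) (j : ι) (n : N) :
    φ (u ⊗ₜ[k] v) (b j ⊗ₜ[k] n) = ∑ i, u (b i) ⊗ₜ[k] actEN (t i j) v n := by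
  rw [hφ, hbt]
  simp

lemma phi_one
    (hφ : ∀ (u : Module.End k M) (v : Module.End k N) (m : M) (n : N),
      φ (u ⊗ₜ[k] v) (m ⊗ₜ[k] n) = TensorProduct.map u
      ((LinearMap.applyₗ (R := k) n) ∘ₗ actEN.flip v) (coactM m))
    (b : Module.Basis ι k M)
    (ht : IsMat k t)
    (hbt : ∀ j, coactM (b j) = ∑ i, b i ⊗ₜ[k] t i j)
    (hone : ∀ m, actN 1 m = m)
    (hmul : ∀ g h m, actN (g * h) m = actN g (actN h m))
    (hE : EndActChar k H A actN actEN)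
    : φ (1 ⊗ₜ[k] 1) = 1 := by
  refine end_ext b _ _ fun j n => ?_
  rw [phi_basis hφ b hbt]
  simp only [endAct_one hone hmul hE ht]
  rw [Finset.sum_eq_single j]
  · simp
  · intro i _ hi; simp [hi]
  · simp

lemma phi_surj
    (hφ : ∀ (u : Module.End k M) (v : Module.End k N) (m : M) (n : N),
      φ (u ⊗ₜ[k] v) (m ⊗ₜ[k] n) = TensorProduct.map u
      ((LinearMap.applyₗ (R := k) n) ∘ₗ actEN.flip v) (coactM m))
    (b : Module.Basis ι k M)
    (ht : IsMat k t)
    (hbt : ∀ j, coactM (b j) = ∑ i, b i ⊗ₜ[k] t i j)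
    (hone : ∀ m, actN 1 m = m)
    (hmul : ∀ g h m, actN (g * h) m = actN g (actN h m))
    (hE : EndActChar k H A actN actEN)
    (hS : IsAntipodeInv k H Sinv)
    [FiniteDimensional k M] [FiniteDimensional k N] : Function.Surjective φ := by
  have key : ∀ (u : Module.End k M) (v : Module.End k N),
      φ (∑ x, ∑ y, (u ∘ₗ (b.coord y).smulRight (b x)) ⊗ₜ[k] actEN (Sinv (t x y)) v)
        = TensorProduct.map u v := by
    intro u v
    refine end_ext b _ _ fun j n => ?_
    simp only [map_sum, LinearMap.sum_apply, phi_basis hφ b hbt]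
    simp only [LinearMap.comp_apply, LinearMap.smulRight_apply, Module.Basis.coord_apply,
      Module.Basis.repr_self, Finsupp.single_apply, ite_smul, one_smul, zero_smul, apply_ite u,
      map_zero, ← endAct_mul hmul hE, TensorProduct.ite_tmul, TensorProduct.zero_tmul,
      Finset.sum_ite_eq', Finset.mem_univ, if_true]
    have h1 : ∀ x, ∑ y, u (b x) ⊗ₜ[k] actEN (t y j * Sinv (t x y)) v n
        = if x = j then u (b x) ⊗ₜ[k] v n else 0 := by
      intro x
      simp only [← TensorProduct.tmul_sum, ← LinearMap.sum_apply, ← map_sum, ht.mul_Sinv hS]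
      split_ifs
      · rw [endAct_one_left hone hE]
      · simp
    simp only [h1]
    simp
  intro f
  obtain ⟨z, rfl⟩ := (homTensorHomEquiv k M N M N).surjective f
  induction z with
  | zero => exact ⟨0, by simp⟩
  | add x y hx hy =>
    obtain ⟨x', hx⟩ := hx
    obtain ⟨y', hy⟩ := hy
    exact ⟨x' + y', by rw [map_add, map_add, hx, hy]⟩
  | tmul u v =>
    refine ⟨_, (key u v).trans ?_⟩
    simp

lemma phi_bij
    (hφ : ∀ (u : Module.End k M) (v : Module.End k N) (m : M) (n : N),
      φ (u ⊗ₜ[k] v) (m ⊗ₜ[k] n) = TensorProduct.map u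
      ((LinearMap.applyₗ (R := k) n) ∘ₗ actEN.flip v) (coactM m))
    (b : Module.Basis ι k M)
    (ht : IsMat k t)
    (hbt : ∀ j, coactM (b j) = ∑ i, b i ⊗ₜ[k] t i j)
    (hone : ∀ m, actN 1 m = m)
    (hmul : ∀ g h m, actN (g * h) m = actN g (actN h m))
    (hE : EndActChar k H A actN actEN)
    (hS : IsAntipodeInv k H Sinv)
    [FiniteDimensional k M] [FiniteDimensional k N] : Function.Bijective φ := by
  have h := phi_surj hφ b ht hbt hone hmul hE hS
  refine ⟨(LinearMap.injective_iff_surjective_of_finrank_eq_finrank ?_).2 h, h⟩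
  exact LinearEquiv.finrank_eq (homTensorHomEquiv k M N M N)

lemma phi_mul
    (hφ : ∀ (u : Module.End k M) (v : Module.End k N) (m : M) (n : N),
      φ (u ⊗ₜ[k] v) (m ⊗ₜ[k] n) = TensorProduct.map u
      ((LinearMap.applyₗ (R := k) n) ∘ₗ actEN.flip v) (coactM m))
    (b : Module.Basis ι k M)
    (ht : IsMat k t)
    (hbt : ∀ j, coactM (b j) = ∑ i, b i ⊗ₜ[k] t i j)
    (hone : ∀ m, actN 1 m = m)
    (hmul : ∀ g h m, actN (g * h) m = actN g (actN h m))
    (hE : EndActChar k H A actN actEN)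
    (hS : IsAntipodeInv k H Sinv)
    {coactEM : Module.End k M →ₗ[k] Module.End k M ⊗[k] H}
    (hcE : EndCoactChar k H Sinv coactM coactEM)
    (u u' : Module.End k M) (v v' : Module.End k N) (s : Finset ℕ)
    (e₀ : ℕ → Module.End k M) (e₁ : ℕ → H)
    (he : coactEM u' = ∑ j ∈ s, e₀ j ⊗ₜ[k] e₁ j) :
    φ (∑ j ∈ s, (u * e₀ j) ⊗ₜ[k] (actEN (e₁ j) v * v'))
          = φ (u ⊗ₜ[k] v) * φ (u' ⊗ₜ[k] v') := by
  refine end_ext b _ _ fun j n => ?_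
  rw [Module.End.mul_apply, phi_basis hφ b hbt u' v', map_sum, map_sum, LinearMap.sum_apply]
  simp only [phi_basis hφ b hbt (_ * _) (_ * _), endAct_mulEnd hone hmul hE ht,
    ← endAct_mul hmul hE, LinearMap.sum_apply, TensorProduct.tmul_sum, Module.End.mul_apply, hφ]
  simp only [← endCoact_mat hS hcE b ht hbt u', he, map_sum, LinearMap.rTensor_tmul,
    LinearMap.lTensor_tmul, TensorProduct.map_tmul, LinearMap.mulLeft_apply, LinearMap.comp_apply,
    LinearMap.flip_apply, LinearMap.applyₗ_apply_apply]
  rw [Finset.sum_comm]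
  rw [Finset.sum_comm]
  refine Eq.trans ?_ (Finset.sum_comm)
  rw [Finset.sum_comm]
  refine Finset.sum_congr rfl fun i _ => ?_
  rw [Finset.sum_comm]

end phi

end main

end GYD

namespace GYD

section main2

variable {k H : Type} [Field k] [Ring H] [HopfAlgebra k H]
variable {ι κ : Type} [Fintype ι] [Fintype κ] [DecidableEq ι] [DecidableEq κ]
variable {M N : Type} [AddCommGroup M] [Module k M] [AddCommGroup N] [Module k N]
variable {coactM : M →ₗ[k] M ⊗[k] H} {actN : H →ₗ[k] N →ₗ[k] N}
    {actEN : H →ₗ[k] Module.End k N →ₗ[k] Module.End k N}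
    {φ : Module.End k M ⊗[k] Module.End k N →ₗ[k] Module.End k (M ⊗[k] N)}

lemma sum_five {X : Type} [AddCommMonoid X] (P Q : Finset ℕ) (f : ι → κ → ℕ → ℕ → ι → X) :
    ∑ x, ∑ e, ∑ p ∈ P, ∑ q ∈ Q, ∑ l, f x e p q l
      = ∑ l, ∑ p ∈ P, ∑ x, ∑ q ∈ Q, ∑ e, f x e p q l := by
  have h1 : ∀ x, ∑ e, ∑ p ∈ P, ∑ q ∈ Q, ∑ l, f x e p q l
      = ∑ l, ∑ p ∈ P, ∑ q ∈ Q, ∑ e, f x e p q l := by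
    intro x
    rw [Finset.sum_comm, Finset.sum_comm (s := Finset.univ) (t := P)]
    refine Finset.sum_congr rfl fun p _ => ?_
    rw [Finset.sum_comm, Finset.sum_comm (s := Finset.univ) (t := Q)]
    refine Finset.sum_congr rfl fun q _ => ?_
    rw [Finset.sum_comm]
  simp only [h1]
  rw [Finset.sum_comm]
  refine Finset.sum_congr rfl fun l _ => ?_
  rw [Finset.sum_comm]

lemma phi_linear
    (hφ : ∀ (u : Module.End k M) (v : Module.End k N) (m : M) (n : N),
      φ (u ⊗ₜ[k] v) (m ⊗ₜ[k] n) = TensorProduct.map u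
      ((LinearMap.applyₗ (R := k) n) ∘ₗ actEN.flip v) (coactM m))
    {Sinv : H → H} (hS : IsAntipodeInv k H Sinv)
    {α β A C B₁ B₂ θ : H →ₐc[k] H} (hαA : ∀ h, α (A h) = h)
    (hB₁ : ∀ h, B₁ (θ h) = A h) (hB₂ : ∀ h, B₂ (θ h) = C (β (A h)))
    {actM : H →ₗ[k] M →ₗ[k] M} (hM : IsYD k H Sinv α β actM coactM)
    (hone : ∀ m, actN 1 m = m) (hmul : ∀ g h m, actN (g * h) m = actN g (actN h m))
    {actEM : H →ₗ[k] Module.End k M →ₗ[k] Module.End k M}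
    (hEM : EndActChar k H A actM actEM)
    (hEN : EndActChar k H C actN actEN)
    {actT : H →ₗ[k] (M ⊗[k] N) →ₗ[k] (M ⊗[k] N)}
    (hT : TensorActChar k H B₁ B₂ actM actN actT)
    {actET : H →ₗ[k] Module.End k (M ⊗[k] N) →ₗ[k] Module.End k (M ⊗[k] N)}
    (hET : EndActChar k H θ actT actET)
    {actS : H →ₗ[k] (Module.End k M ⊗[k] Module.End k N)
        →ₗ[k] (Module.End k M ⊗[k] Module.End k N)}
    (hactS : TensorActChar k H id id actEM actEN actS)
    (h : H) (x : Module.End k M ⊗[k] Module.End k N) : φ (actS h x) = actET h (φ x) := by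
  have honeT := tensorAct_one hM.1 hone hT
  have hmulT := tensorAct_mul hM.2.1 hmul hT
  have main : ∀ {ι : Type} [Fintype ι] [DecidableEq ι] (c : ι → ι → H), IsMat k c → ∀ i j,
      φ (actS (c i j) x) = actET (c i j) (φ x) := by
    intro ι _ _ c hc i j
    induction x with
    | zero => simp
    | add x y hx hy => simp only [map_add, hx, hy]
    | tmul u v =>
    refine cancel honeT hmulT hc θ (fun j => φ (actS (c i j) (u ⊗ₜ[k] v)))
      (fun j => actET (c i j) (φ (u ⊗ₜ[k] v))) (fun j y => ?_) j
    rw [endAct_mat honeT hmulT hET hc]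
    induction y with
    | zero => simp
    | add x y hx hy => simp only [map_add, Finset.sum_add_distrib, hx, hy]
    | tmul m n =>
    have hd : IsMat k (fun i j => A (c i j)) := hc.map A
    have hβd : IsMat k (fun i j => β (A (c i j))) := hd.map β
    have hθ : IsMat k (fun i j => θ (c i j)) := hc.map θ
    have hyd : ∀ i j m, ∑ l, LinearMap.lTensor M (LinearMap.mulRight k (c i l))
        (coactM (actM (A (c l j)) m)) = ∑ r, TensorProduct.map (actM (A (c i r)))
          (LinearMap.mulLeft k (β (A (c r j)))) (coactM m) := by
      intro i j m
      have := yd_mat hS α β hM hd i j m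
      simpa only [hαA] using this
    have h1 : ∀ y : M ⊗[k] N, actT (θ (c i j)) y = ∑ q,
        TensorProduct.map (actM (A (c i q))) (actN (C (β (A (c q j))))) y := by
      intro y
      induction y with
      | zero => simp
      | add x y hx hy => simp only [map_add, Finset.sum_add_distrib, hx, hy]
      | tmul m n =>
        rw [tensorAct_fin hT _ _ _ (hθ.1 i j)]
        simp only [hB₁, hB₂, TensorProduct.map_tmul]
    rw [h1, hφ]
    simp only [tensorAct_fin hT _ _ _ (hθ.1 _ j), tensorAct_fin hactS _ _ _ (hc.1 i _), hB₁, hB₂,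
      map_sum, LinearMap.sum_apply, hφ, id]
    have h2 : ∀ x p q, TensorProduct.map (actEM (c i q) u)
        ((LinearMap.applyₗ (R := k) (actN (C (β (A (c p j)))) n)) ∘ₗ
          actEN.flip (actEN (c q x) v)) (coactM (actM (A (c x p)) m))
        = TensorProduct.map (actEM (c i q) u)
        ((LinearMap.applyₗ (R := k) (actN (C (β (A (c p j)))) n)) ∘ₗ
          actEN.flip v) (LinearMap.lTensor M (LinearMap.mulRight k (c q x))
            (coactM (actM (A (c x p)) m))) := by
      intro x p q
      generalize coactM (actM (A (c x p)) m) = z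
      induction z with
      | zero => simp only [map_zero]
      | add x y hx hy => simp only [map_add, hx, hy]
      | tmul x y => simp [endAct_mul hmul hEN]
    simp only [h2]
    have h3 : ∑ x, ∑ p, ∑ q, TensorProduct.map (actEM (c i q) u)
        ((LinearMap.applyₗ (R := k) (actN (C (β (A (c p j)))) n)) ∘ₗ
          actEN.flip v) (LinearMap.lTensor M (LinearMap.mulRight k (c q x))
            (coactM (actM (A (c x p)) m)))
      = ∑ p, ∑ q, ∑ r, TensorProduct.map (actEM (c i q) u)
        ((LinearMap.applyₗ (R := k) (actN (C (β (A (c p j)))) n)) ∘ₗ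
          actEN.flip v) (TensorProduct.map (actM (A (c q r)))
          (LinearMap.mulLeft k (β (A (c r p)))) (coactM m)) := by
      rw [Finset.sum_comm]
      refine Finset.sum_congr rfl fun p _ => ?_
      rw [Finset.sum_comm]
      refine Finset.sum_congr rfl fun q _ => ?_
      rw [← map_sum, hyd, map_sum]
    refine Eq.trans ?_ (h3.trans ?_)
    · rfl
    · generalize coactM m = z
      induction z with
      | zero => simp
      | add x y hx hy => simp only [map_add, Finset.sum_add_distrib, hx, hy]
      | tmul x y =>
        simp only [TensorProduct.map_tmul, LinearMap.comp_apply, LinearMap.mulLeft_apply,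
          LinearMap.flip_apply, LinearMap.applyₗ_apply_apply, endAct_mul hmul hEN]
        have h4 : ∀ p, ∑ q, ∑ r, (actEM (c i q) u) (actM (A (c q r)) x) ⊗ₜ[k]
            actEN (β (A (c r p))) (actEN y v) (actN (C (β (A (c p j)))) n)
            = ∑ r, actM (A (c i r)) (u x) ⊗ₜ[k]
              actEN (β (A (c r p))) (actEN y v) (actN (C (β (A (c p j)))) n) := by
          intro p
          rw [Finset.sum_comm]
          simp only [← TensorProduct.sum_tmul, endAct_mat hM.1 hM.2.1 hEM hc]
        simp only [h4]
        rw [Finset.sum_comm]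
        refine Finset.sum_congr rfl fun r _ => ?_
        rw [← TensorProduct.tmul_sum, endAct_mat hone hmul hEN hβd]
  obtain ⟨n, c, a, hc, rfl⟩ := exists_mat_of_elem (k := k) h
  simp only [map_sum, map_smul, LinearMap.sum_apply, LinearMap.smul_apply, main c hc]

lemma phi_colinear
    (hφ : ∀ (u : Module.End k M) (v : Module.End k N) (m : M) (n : N),
      φ (u ⊗ₜ[k] v) (m ⊗ₜ[k] n) = TensorProduct.map u
      ((LinearMap.applyₗ (R := k) n) ∘ₗ actEN.flip v) (coactM m))
    {Sinv : H → H} (hS : IsAntipodeInv k H Sinv)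
    (γ δ A : H →ₐc[k] H) (hγA : ∀ h, γ (A h) = h)
    (b : Module.Basis ι k M) {t : ι → ι → H}
    (ht : IsMat k t) (hbt : ∀ j, coactM (b j) = ∑ i, b i ⊗ₜ[k] t i j)
    {coactN : N →ₗ[k] N ⊗[k] H}
    (hN : IsYD k H Sinv γ δ actN coactN)
    (b' : Module.Basis κ k N) {s : κ → κ → H}
    (hs : IsMat k s) (hbs : ∀ j, coactN (b' j) = ∑ i, b' i ⊗ₜ[k] s i j)
    (hE : EndActChar k H A actN actEN)
    {coactEM : Module.End k M →ₗ[k] Module.End k M ⊗[k] H}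
    {coactEN : Module.End k N →ₗ[k] Module.End k N ⊗[k] H}
    (hcEM : EndCoactChar k H Sinv coactM coactEM)
    (hcEN : EndCoactChar k H Sinv coactN coactEN)
    {coactT : M ⊗[k] N →ₗ[k] (M ⊗[k] N) ⊗[k] H}
    (hcoactT : TensorCoactChar k H coactM coactN coactT)
    {coactET : Module.End k (M ⊗[k] N) →ₗ[k] Module.End k (M ⊗[k] N) ⊗[k] H}
    (hcoactET : EndCoactChar k H Sinv coactT coactET)
    {coactS : Module.End k M ⊗[k] Module.End k N
        →ₗ[k] (Module.End k M ⊗[k] Module.End k N) ⊗[k] H}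
    (hcoactS : TensorCoactChar k H coactEM coactEN coactS)
    (x : Module.End k M ⊗[k] Module.End k N) :
    coactET (φ x) = LinearMap.rTensor H φ (coactS x) := by
  induction x with
  | zero => simp
  | add x y hx hy => simp only [map_add, hx, hy]
  | tmul u v =>
  have hbT : ∀ y : ι × κ, coactT ((b.tensorProduct b') y)
      = ∑ x : ι × κ, (b.tensorProduct b') x ⊗ₜ[k] (s x.2 y.2 * t x.1 y.1) := by
    rintro ⟨j, a⟩
    rw [Module.Basis.tensorProduct_apply, tensorCoact_eq hcoactT, hbt, hbs,
      Fintype.sum_prod_type, Finset.sum_comm]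
    simp only [map_sum, LinearMap.sum_apply, TensorProduct.map₂_apply_tmul,
      TensorProduct.map_tmul, TensorProduct.mk_apply,
      LinearMap.flip_apply, LinearMap.mul_apply', Module.Basis.tensorProduct_apply]
  refine endCoact_unique hS hcoactET (b.tensorProduct b') (ht.prod hs) hbT _ _ ?_
  rintro ⟨j, a⟩
  obtain ⟨P, u0, u1, hu⟩ := exists_nat_repr (coactEM u)
  obtain ⟨Q, v0, v1, hv⟩ := exists_nat_repr (coactEN v)
  rw [hcoactS u v P Q u0 u1 v0 v1 hu hv, Module.Basis.tensorProduct_apply,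
    phi_basis hφ b hbt u v, map_sum coactT]
  simp only [tensorCoact_eq hcoactT]
  simp only [← endCoact_mat hS hcEM b ht hbt u, hu]
  have key := fun l => key_coact hS γ δ A hγA hN hE hcEN b' hs hbs ht v Q v0 v1 hv l j (b' a)
  simp only [hbs] at key
  simp only [map_sum, LinearMap.sum_apply, LinearMap.rTensor_tmul, LinearMap.lTensor_tmul,
    LinearMap.applyₗ_apply_apply, LinearMap.mulLeft_apply, Module.Basis.tensorProduct_apply,
    phi_basis hφ b hbt, TensorProduct.map_tmul, LinearMap.mulRight_apply,
    Fintype.sum_prod_type, TensorProduct.sum_tmul] at key ⊢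
  have h1 : ∀ (l i : ι) (p : ℕ) (z : N ⊗[k] H),
      TensorProduct.map₂ (TensorProduct.mk k M N) (LinearMap.mul k H).flip
        (u0 p (b l) ⊗ₜ[k] (t l i * u1 p)) z
      = TensorProduct.map (TensorProduct.mk k M N (u0 p (b l))) (LinearMap.mulRight k (u1 p))
        (LinearMap.lTensor N (LinearMap.mulRight k (t l i)) z) := by
    intro l i p z
    induction z with
    | zero => simp only [map_zero]
    | add x y hx hy => simp only [map_add, hx, hy]
    | tmul x y => simp [mul_assoc]
  simp only [h1]
  -- put both sides in the order `p`, `l`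
  have h2 : ∑ i, ∑ l, ∑ p ∈ P,
      TensorProduct.map (TensorProduct.mk k M N (u0 p (b l))) (LinearMap.mulRight k (u1 p))
        (LinearMap.lTensor N (LinearMap.mulRight k (t l i)) (coactN (actEN (t i j) v (b' a))))
      = ∑ l, ∑ p ∈ P, ∑ x, ∑ q ∈ Q, ∑ e,
        (u0 p (b l) ⊗ₜ[k] actEN (t l x) (v0 q) (b' e)) ⊗ₜ[k]
          (s e a * (t x j * v1 q) * u1 p) := by
    rw [Finset.sum_comm]
    refine Finset.sum_congr rfl fun l _ => ?_
    rw [Finset.sum_comm]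
    refine Finset.sum_congr rfl fun p _ => ?_
    rw [← map_sum, ← key l]
    simp only [map_sum, TensorProduct.map_tmul, TensorProduct.mk_apply, LinearMap.mulRight_apply]
  refine Eq.trans ?_ h2.symm
  simp only [mul_assoc]
  exact sum_five P Q fun x e p q l => (u0 p (b l) ⊗ₜ[k] actEN (t l x) (v0 q) (b' e)) ⊗ₜ[k]
    (s e a * (t x j * (v1 q * u1 p)))

end main2

end GYD

theorem statement_16
    (k H : Type) [Field k] [Ring H] [HopfAlgebra k H]
    (Sinv : H → H) (hS : GYD.IsAntipodeInv k H Sinv)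
    (α β γ δ : H ≃ₗ[k] H)
    (hα : GYD.IsHopfAut k H α) (hβ : GYD.IsHopfAut k H β)
    (hγ : GYD.IsHopfAut k H γ) (hδ : GYD.IsHopfAut k H δ)
    (M N : Type) [AddCommGroup M] [Module k M] [AddCommGroup N] [Module k N]
    [FiniteDimensional k M] [FiniteDimensional k N]
    (actM : H →ₗ[k] M →ₗ[k] M) (coactM : M →ₗ[k] M ⊗[k] H)
    (actN : H →ₗ[k] N →ₗ[k] N) (coactN : N →ₗ[k] N ⊗[k] H)
    (hM : GYD.IsYD k H Sinv ⇑α ⇑β actM coactM)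
    (hN : GYD.IsYD k H Sinv ⇑γ ⇑δ actN coactN)
    -- End(M)
    (actEM : H →ₗ[k] Module.End k M →ₗ[k] Module.End k M)
    (coactEM : Module.End k M →ₗ[k] Module.End k M ⊗[k] H)
    (hactEM : GYD.EndActChar k H ⇑α.symm actM actEM)
    (hcoactEM : GYD.EndCoactChar k H Sinv coactM coactEM)
    -- End(N)
    (actEN : H →ₗ[k] Module.End k N →ₗ[k] Module.End k N)
    (coactEN : Module.End k N →ₗ[k] Module.End k N ⊗[k] H)
    (hactEN : GYD.EndActChar k H ⇑γ.symm actN actEN)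
    (hcoactEN : GYD.EndCoactChar k H Sinv coactN coactEN)
    -- M ⊗̂ N, an (αγ, δγ⁻¹βγ)-Yetter-Drinfeld module
    (actT : H →ₗ[k] (M ⊗[k] N) →ₗ[k] (M ⊗[k] N))
    (coactT : M ⊗[k] N →ₗ[k] (M ⊗[k] N) ⊗[k] H)
    (hactT : GYD.TensorActChar k H ⇑γ (fun h => γ.symm (β (γ h))) actM actN actT)
    (hcoactT : GYD.TensorCoactChar k H coactM coactN coactT)
    -- End(M ⊗̂ N)
    (actET : H →ₗ[k] Module.End k (M ⊗[k] N) →ₗ[k] Module.End k (M ⊗[k] N))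
    (coactET : Module.End k (M ⊗[k] N) →ₗ[k] Module.End k (M ⊗[k] N) ⊗[k] H)
    (hactET : GYD.EndActChar k H (fun h => γ.symm (α.symm h)) actT actET)
    (hcoactET : GYD.EndCoactChar k H Sinv coactT coactET)
    -- the Yetter-Drinfeld structures of the smash product End(M) # End(N)
    (actS : H →ₗ[k] (Module.End k M ⊗[k] Module.End k N)
        →ₗ[k] (Module.End k M ⊗[k] Module.End k N))
    (coactS : Module.End k M ⊗[k] Module.End k N
        →ₗ[k] (Module.End k M ⊗[k] Module.End k N) ⊗[k] H)
    (hactS : GYD.TensorActChar k H id id actEM actEN actS)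
    (hcoactS : GYD.TensorCoactChar k H coactEM coactEN coactS)
    -- the map φ(u # v)(m ⊗ n) = u(m₍₀₎) ⊗ (m₍₁₎ · v)(n)
    (φ : Module.End k M ⊗[k] Module.End k N →ₗ[k] Module.End k (M ⊗[k] N))
    (hφ : ∀ (u : Module.End k M) (v : Module.End k N) (m : M) (n : N)
        (t : Finset ℕ) (m₀ : ℕ → M) (m₁ : ℕ → H),
        coactM m = ∑ j ∈ t, m₀ j ⊗ₜ[k] m₁ j →
        φ (u ⊗ₜ[k] v) (m ⊗ₜ[k] n) = ∑ j ∈ t, u (m₀ j) ⊗ₜ[k] (actEN (m₁ j) v) n) :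
    Function.Bijective φ ∧
    -- φ is an algebra map from the smash product End(M) # End(N) to End(M ⊗̂ N)
    φ ((1 : Module.End k M) ⊗ₜ[k] (1 : Module.End k N)) = 1 ∧
    (∀ (u u' : Module.End k M) (v v' : Module.End k N) (t : Finset ℕ)
        (e₀ : ℕ → Module.End k M) (e₁ : ℕ → H),
        coactEM u' = ∑ j ∈ t, e₀ j ⊗ₜ[k] e₁ j →
        φ (∑ j ∈ t, (u * e₀ j) ⊗ₜ[k] (actEN (e₁ j) v * v'))
          = φ (u ⊗ₜ[k] v) * φ (u' ⊗ₜ[k] v')) ∧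
    -- φ is H-linear and H-colinear
    (∀ (h : H) (x : Module.End k M ⊗[k] Module.End k N), φ (actS h x) = actET h (φ x)) ∧
    (∀ x : Module.End k M ⊗[k] Module.End k N,
        coactET (φ x) = LinearMap.rTensor H φ (coactS x)) := by
  obtain ⟨α', hα'⟩ := GYD.exists_bialgHom α hα
  obtain ⟨β', hβ'⟩ := GYD.exists_bialgHom β hβ
  obtain ⟨γ', hγ'⟩ := GYD.exists_bialgHom γ hγ
  obtain ⟨δ', hδ'⟩ := GYD.exists_bialgHom δ hδ
  obtain ⟨A, hA⟩ := GYD.exists_bialgHom α.symm (GYD.isHopfAut_symm α hα)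
  obtain ⟨C, hC⟩ := GYD.exists_bialgHom γ.symm (GYD.isHopfAut_symm γ hγ)
  have eα : ⇑α = ⇑α' := funext fun h => (hα' h).symm
  have eβ : ⇑β = ⇑β' := funext fun h => (hβ' h).symm
  have eγ : ⇑γ = ⇑γ' := funext fun h => (hγ' h).symm
  have eδ : ⇑δ = ⇑δ' := funext fun h => (hδ' h).symm
  have eA : ⇑α.symm = ⇑A := funext fun h => (hA h).symm
  have eC : ⇑γ.symm = ⇑C := funext fun h => (hC h).symm
  have eB : (fun h => γ.symm (β (γ h))) = ⇑((C.comp β').comp γ') := by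
    funext h
    simp [hC, hβ', hγ']
  have eθ : (fun h => γ.symm (α.symm h)) = ⇑(C.comp A) := by
    funext h
    simp [hC, hA]
  rw [eα, eβ] at hM
  rw [eγ, eδ] at hN
  rw [eA] at hactEM
  rw [eC] at hactEN
  rw [eB, eγ] at hactT
  rw [eθ] at hactET
  have hαA : ∀ h, α' (A h) = h := fun h => by simp [hα', hA]
  have hγC : ∀ h, γ' (C h) = h := fun h => by simp [hγ', hC]
  have hφ' := GYD.phi_eq hφ
  obtain ⟨t, ht, hbt⟩ := GYD.exists_mat (Module.finBasis k M) hM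
  obtain ⟨s, hs, hbs⟩ := GYD.exists_mat (Module.finBasis k N) hN
  refine ⟨GYD.phi_bij hφ' _ ht hbt hN.1 hN.2.1 hactEN hS,
    GYD.phi_one hφ' _ ht hbt hN.1 hN.2.1 hactEN,
    fun u u' v v' r e₀ e₁ he => GYD.phi_mul hφ' _ ht hbt hN.1 hN.2.1 hactEN hS hcoactEM
      u u' v v' r e₀ e₁ he,
    fun h x => GYD.phi_linear (α := α') (β := β') (A := A) (C := C) hφ' hS hαA ?_ ?_ hM
      hN.1 hN.2.1 hactEM hactEN hactT hactET hactS h x,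
    fun x => GYD.phi_colinear hφ' hS γ' δ' C hγC _ ht hbt hN _ hs hbs hactEN hcoactEM hcoactEN
      hcoactT hcoactET hcoactS x⟩
  · intro h
    simp [hγC]
  · intro h
    simp [hγC]

end
end
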